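/- arXiv:math/0406264 — 11 statements merged into one kernel-verified Lean document; each statement's English description precedes it below -/
import Mathlib

section
/- For each n ≥ 271 there exists a strictly convex norm N on ℝ^n and a finite set S ⊆ ℝ^n with card S ≥ 1.058^n such that S is equilateral with respect to N; that is, there is a function N : ℝ^n → ℝ satisfying N(x) ≥ 0 with N(x) = 0 iff x = 0, N(a•x) = |a|·N(x), N(x + y) ≤ N(x) + N(y), and moreover N(x + y) < N(x) + N(y) whenever x and y are linearly independent, together with λ > 0 such that N(x − y) = λ for all distinct x, y ∈ S. -/
namespace EquiSC

open Matrix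

lemma exists_min_pos {α : Type*} [Finite α] (p : α → Prop) (g : α → ℝ)
    (h : ∀ a, p a → 0 < g a) : ∃ m : ℝ, 0 < m ∧ ∀ a, p a → m ≤ g a := by
  classical
  rcases isEmpty_or_nonempty α with he | hne
  · exact ⟨1, one_pos, fun a => (he.false a).elim⟩
  · obtain ⟨b, hb⟩ := Finite.exists_min (fun a => if p a then g a else 1)
    refine ⟨if p b then g b else 1, ?_, ?_⟩
    · split_ifs with hp
      · exact h b hp
      · exact one_pos
    · intro a ha
      have := hb a
      simpa [ha] using this

lemma dot_self_pos {n : ℕ} {z : Fin n → ℝ} (hz : z ≠ 0) : 0 < z ⬝ᵥ z := by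
  have h0 : 0 ≤ z ⬝ᵥ z := Finset.sum_nonneg fun i _ => mul_self_nonneg _
  rcases h0.lt_or_eq with h | h
  · exact h
  · exact absurd (dotProduct_self_eq_zero.1 h.symm) hz

def Q {n : ℕ} (c δ : ℝ) (w z : Fin n → ℝ) : ℝ := c * (w ⬝ᵥ z) ^ 2 + δ * (z ⬝ᵥ z)

def B {n : ℕ} (c δ : ℝ) (w x y : Fin n → ℝ) : ℝ := c * (w ⬝ᵥ x) * (w ⬝ᵥ y) + δ * (x ⬝ᵥ y)

section
variable {n : ℕ} {c δ : ℝ} {w : Fin n → ℝ}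

lemma Q_pos (hc : 0 ≤ c) (hδ : 0 < δ) {z : Fin n → ℝ} (hz : z ≠ 0) : 0 < Q c δ w z := by
  have := dot_self_pos hz
  unfold Q
  positivity

lemma Q_nonneg (hc : 0 ≤ c) (hδ : 0 < δ) (z : Fin n → ℝ) : 0 ≤ Q c δ w z := by
  rcases eq_or_ne z 0 with rfl | hz
  · simp [Q]
  · exact (Q_pos hc hδ hz).le

lemma Q_comb (a b : ℝ) (x y : Fin n → ℝ) :
    Q c δ w (a • x + b • y) = a ^ 2 * Q c δ w x + 2 * a * b * B c δ w x y + b ^ 2 * Q c δ w y := by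
  unfold Q B
  simp only [dotProduct_add, add_dotProduct, dotProduct_smul, smul_dotProduct, smul_eq_mul]
  rw [dotProduct_comm y x]
  ring

lemma Q_add (x y : Fin n → ℝ) :
    Q c δ w (x + y) = Q c δ w x + 2 * B c δ w x y + Q c δ w y := by
  have := Q_comb (c := c) (δ := δ) (w := w) 1 1 x y
  simpa using this

lemma sqrt_tri (hc : 0 ≤ c) (hδ : 0 < δ) (x y : Fin n → ℝ) :
    √(Q c δ w (x + y)) ≤ √(Q c δ w x) + √(Q c δ w y) := by
  have hx := Q_nonneg (w := w) hc hδ x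
  have hy := Q_nonneg (w := w) hc hδ y
  have key : B c δ w x y ^ 2 ≤ Q c δ w x * Q c δ w y := by
    rcases eq_or_ne y 0 with rfl | hy0
    · simp [Q, B]
    have hyp := Q_pos (w := w) hc hδ hy0
    have h := Q_nonneg (w := w) hc hδ (Q c δ w y • x + (-B c δ w x y) • y)
    rw [Q_comb] at h
    have : 0 ≤ Q c δ w y * (Q c δ w x * Q c δ w y - B c δ w x y ^ 2) := by linarith
    have := nonneg_of_mul_nonneg_right this hyp
    linarith
  have hB : B c δ w x y ≤ √(Q c δ w x) * √(Q c δ w y) := by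
    rw [← Real.sqrt_mul hx]
    exact Real.le_sqrt_of_sq_le key
  apply Real.sqrt_le_iff.2 ⟨by positivity, ?_⟩
  rw [Q_add, add_sq, Real.sq_sqrt hx, Real.sq_sqrt hy]
  linarith

lemma sqrt_tri_lt (hc : 0 ≤ c) (hδ : 0 < δ) (x y : Fin n → ℝ)
    (hli : LinearIndependent ℝ ![x, y]) :
    √(Q c δ w (x + y)) < √(Q c δ w x) + √(Q c δ w y) := by
  have hx := Q_nonneg (w := w) hc hδ x
  have hy := Q_nonneg (w := w) hc hδ y
  rw [LinearIndependent.pair_iff] at hli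
  have hy0 : y ≠ 0 := by
    rintro rfl
    have := (hli 0 1 (by simp)).2
    exact one_ne_zero this
  have hyp := Q_pos (w := w) hc hδ hy0
  have key : B c δ w x y ^ 2 < Q c δ w x * Q c δ w y := by
    have h := Q_pos (w := w) hc hδ (z := Q c δ w y • x + (-B c δ w x y) • y)
      (fun h => hyp.ne' (hli _ _ h).1)
    rw [Q_comb] at h
    have : 0 < Q c δ w y * (Q c δ w x * Q c δ w y - B c δ w x y ^ 2) := by linarith
    have := pos_of_mul_pos_right this hyp.le
    linarith
  have hB : B c δ w x y < √(Q c δ w x) * √(Q c δ w y) := by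
    rw [← Real.sqrt_mul hx]
    exact Real.lt_sqrt_of_sq_lt key
  rw [Real.sqrt_lt' (by have := Real.sqrt_pos.2 hyp; positivity)]
  rw [Q_add, add_sq, Real.sq_sqrt hx, Real.sq_sqrt hy]
  linarith

end

/-- acute families -/
def Acute {n : ℕ} {ι : Type} (x : ι → Fin n → ℝ) : Prop :=
  ∀ i j k, j ≠ i → k ≠ i → 0 < (x j - x i) ⬝ᵥ (x k - x i)

lemma exists_norm {n : ℕ} {ι : Type} [Fintype ι] [Nontrivial ι] (x : ι → Fin n → ℝ)
    (hx : Acute x) : ∃ N : (Fin n → ℝ) → ℝ,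
      (∀ x, 0 ≤ N x) ∧
      (∀ x, N x = 0 ↔ x = 0) ∧
      (∀ (a : ℝ) (x), N (a • x) = |a| * N x) ∧
      (∀ x y, N (x + y) ≤ N x + N y) ∧
      (∀ x y, LinearIndependent ℝ ![x, y] → N (x + y) < N x + N y) ∧
      ∀ i j, i ≠ j → N (x i - x j) = 1 := by
  classical
  let P := {p : ι × ι // p.1 ≠ p.2}
  haveI : Nonempty P := by
    obtain ⟨i, j, h⟩ := exists_pair_ne ι
    exact ⟨⟨(i, j), h⟩⟩
  let w : P → Fin n → ℝ := fun p => x p.1.1 - x p.1.2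
  let f : P → (Fin n → ℝ) → ℝ := fun p z => (w p ⬝ᵥ z) / (w p ⬝ᵥ w p)
  have hw : ∀ p, 0 < w p ⬝ᵥ w p := fun p => hx _ _ _ p.2 p.2
  -- strict antipodality
  have hbet : ∀ (p : P) k, k ≠ p.1.1 → k ≠ p.1.2 →
      w p ⬝ᵥ x p.1.2 < w p ⬝ᵥ x k ∧ w p ⬝ᵥ x k < w p ⬝ᵥ x p.1.1 := by
    intro p k h1 h2
    have e1 := hx p.1.2 p.1.1 k p.2 h2
    have e2 := hx p.1.1 p.1.2 k p.2.symm h1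
    have e3 : x p.1.2 - x p.1.1 = - w p := by simp [w]
    rw [e3, neg_dotProduct] at e2
    change 0 < w p ⬝ᵥ _ at e1
    rw [dotProduct_sub] at e1 e2
    constructor <;> linarith
  have hbase : ∀ p : P, w p ⬝ᵥ w p = w p ⬝ᵥ x p.1.1 - w p ⬝ᵥ x p.1.2 := by
    intro p; rw [← dotProduct_sub]
  have hf : ∀ p q : P, ¬ (q = p ∨ (q.1.1 = p.1.2 ∧ q.1.2 = p.1.1)) → f p (w q) ^ 2 < 1 := by
    rintro p ⟨⟨k, l⟩, hkl⟩ hq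
    have hne1 : ¬ (k = p.1.1 ∧ l = p.1.2) := by
      rintro ⟨rfl, rfl⟩; exact hq (Or.inl rfl)
    have hne2 : ¬ (k = p.1.2 ∧ l = p.1.1) := fun h => hq (Or.inr h)
    simp only [f, div_pow]
    rw [div_lt_one (by have := hw p; positivity), sq_lt_sq, abs_of_pos (hw p), abs_lt]
    have e : w p ⬝ᵥ w ⟨(k, l), hkl⟩ = w p ⬝ᵥ x k - w p ⬝ᵥ x l := by rw [← dotProduct_sub]
    have hp := hw p
    have hk := hbet p k
    have hl := hbet p l
    rw [e]
    rw [hbase] at hp ⊢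
    have hkl' : k ≠ l := hkl
    by_cases k1 : k = p.1.1
    · subst k1
      have hl2 : l ≠ p.1.2 := fun h => hne1 ⟨rfl, h⟩
      have := hl hkl'.symm hl2
      constructor <;> linarith
    by_cases k2 : k = p.1.2
    · subst k2
      have hl1 : l ≠ p.1.1 := fun h => hne2 ⟨rfl, h⟩
      have := hl hl1 hkl'.symm
      constructor <;> linarith
    have := hk k1 k2
    by_cases l1 : l = p.1.1
    · subst l1
      constructor <;> linarith
    by_cases l2 : l = p.1.2
    · subst l2
      constructor <;> linarith
    have := hl l1 l2
    constructor <;> linarith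
  obtain ⟨m, hm, hm'⟩ := exists_min_pos
    (fun a : P × P => ¬ (a.2 = a.1 ∨ (a.2.1.1 = a.1.1.2 ∧ a.2.1.2 = a.1.1.1)))
    (fun a => 1 - f a.1 (w a.2) ^ 2) (fun a ha => by have := hf _ _ ha; linarith)
  obtain ⟨b, hb⟩ := Finite.exists_max (fun p : P => w p ⬝ᵥ w p)
  set D := w b ⬝ᵥ w b with hD
  have hDp : 0 < D := hw b
  obtain ⟨δ, hδ, hδ1, hδm⟩ : ∃ δ : ℝ, 0 < δ ∧ δ * D ≤ 1 ∧ δ * D ≤ m := by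
    refine ⟨min 1 m / D, by positivity, ?_, ?_⟩
    · rw [div_mul_cancel₀ _ hDp.ne']; exact min_le_left _ _
    · rw [div_mul_cancel₀ _ hDp.ne']; exact min_le_right _ _
  let c : P → ℝ := fun p => (1 - δ * (w p ⬝ᵥ w p)) / (w p ⬝ᵥ w p) ^ 2
  have hδp : ∀ p, δ * (w p ⬝ᵥ w p) ≤ δ * D := fun p => by
    have := hb p
    gcongr
  have hc : ∀ p, 0 ≤ c p := fun p => by
    have := hδp p
    exact div_nonneg (by linarith) (by positivity)
  have hcf : ∀ p z, Q (c p) δ (w p) z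
      = (1 - δ * (w p ⬝ᵥ w p)) * f p z ^ 2 + δ * (z ⬝ᵥ z) := by
    intro p z
    simp only [Q, c, f]
    ring
  have hself : ∀ p, Q (c p) δ (w p) (w p) = 1 := by
    intro p
    rw [hcf]
    have : f p (w p) = 1 := div_self (hw p).ne'
    rw [this]; ring
  have hneg : ∀ p z, Q (c p) δ (w p) (-z) = Q (c p) δ (w p) z := by
    intro p z; simp [Q]
  have hle : ∀ p q, Q (c p) δ (w p) (w q) ≤ 1 := by
    intro p q
    by_cases h : (q = p ∨ (q.1.1 = p.1.2 ∧ q.1.2 = p.1.1))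
    · rcases h with rfl | ⟨h1, h2⟩
      · exact (hself _).le
      · have : w q = - w p := by simp only [w, h1, h2]; abel
        rw [this, hneg, hself]
    · have h1 : m ≤ 1 - f p (w q) ^ 2 := hm' (p, q) h
      rw [hcf]
      have h2 := hδp q
      have h3 : 0 ≤ δ * (w p ⬝ᵥ w p) * f p (w q) ^ 2 := by
        have := hw p
        positivity
      nlinarith
  let M : P → (Fin n → ℝ) → ℝ := fun p z => √(Q (c p) δ (w p) z)
  let N : (Fin n → ℝ) → ℝ := fun z => Finset.univ.sup' Finset.univ_nonempty (fun p => M p z)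
  have hN1 : ∀ p z, M p z ≤ N z := fun p z =>
    Finset.le_sup' (fun p => M p z) (Finset.mem_univ p)
  have hN2 : ∀ z, ∃ p, N z = M p z := fun z => by
    obtain ⟨p, -, hp⟩ := Finset.exists_mem_eq_sup' Finset.univ_nonempty (fun p => M p z)
    exact ⟨p, hp⟩
  refine ⟨N, ?_, ?_, ?_, ?_, ?_, ?_⟩
  · intro z
    obtain ⟨p, hp⟩ := hN2 z
    rw [hp]; exact Real.sqrt_nonneg _
  · intro z
    obtain ⟨p, hp⟩ := hN2 z
    constructor
    · intro h
      by_contra hz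
      have := Real.sqrt_pos.2 (Q_pos (w := w p) (hc p) hδ hz)
      rw [hp] at h
      exact this.ne' h
    · rintro rfl
      rw [hp]; simp [M, Q]
  · intro a z
    have hM : ∀ p, M p (a • z) = |a| * M p z := by
      intro p
      have : Q (c p) δ (w p) (a • z) = a ^ 2 * Q (c p) δ (w p) z := by
        simp only [Q, dotProduct_smul, smul_dotProduct, smul_eq_mul]; ring
      simp only [M]
      rw [this, Real.sqrt_mul (sq_nonneg _), Real.sqrt_sq_eq_abs]
    apply le_antisymm
    · obtain ⟨p, hp⟩ := hN2 (a • z)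
      rw [hp, hM]
      exact mul_le_mul_of_nonneg_left (hN1 _ _) (abs_nonneg _)
    · obtain ⟨p, hp⟩ := hN2 z
      rw [hp, ← hM]
      exact hN1 _ _
  · intro y z
    obtain ⟨p, hp⟩ := hN2 (y + z)
    rw [hp]
    exact (sqrt_tri (hc p) hδ y z).trans (add_le_add (hN1 p y) (hN1 p z))
  · intro y z h
    obtain ⟨p, hp⟩ := hN2 (y + z)
    rw [hp]
    exact (sqrt_tri_lt (hc p) hδ y z h).trans_le (add_le_add (hN1 p y) (hN1 p z))
  · intro i j hij
    let q : P := ⟨(i, j), hij⟩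
    change N (w q) = 1
    apply le_antisymm
    · obtain ⟨p, hp⟩ := hN2 (w q)
      rw [hp]
      exact Real.sqrt_le_one.2 (hle p q)
    · have : M q (w q) = 1 := by simp only [M]; rw [hself]; exact Real.sqrt_one
      rw [← this]; exact hN1 _ _

lemma exists_dirs (ι : Type) [Fintype ι] : ∃ a b : ι → ℝ,
    (∀ i, a i ^ 2 + b i ^ 2 = 1) ∧
    ∀ i j, i ≠ j → a i * a j + b i * b j < 1 ∧ -1 < a i * a j + b i * b j := by
  let e := Fintype.equivFin ι
  let a : ι → ℝ := fun i => 1 / ((e i : ℕ) + 1 : ℝ)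
  have ha0 : ∀ i, 0 < a i := fun i => by positivity
  have ha1 : ∀ i, a i ≤ 1 := fun i => by
    simp only [a]
    rw [div_le_one (by positivity)]
    have : (0 : ℝ) ≤ ((e i : ℕ) : ℝ) := by positivity
    linarith
  have hinj : ∀ i j, i ≠ j → a i ≠ a j := by
    intro i j hij h
    apply hij
    apply e.injective
    simp only [a, one_div, _root_.inv_inj, add_left_inj, Nat.cast_inj] at h
    exact Fin.ext h
  have hu : ∀ i, a i ^ 2 + √(1 - a i ^ 2) ^ 2 = 1 := fun i => by
    rw [Real.sq_sqrt]
    · ring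
    · have := ha0 i; have := ha1 i; nlinarith
  refine ⟨a, fun i => √(1 - a i ^ 2), hu, ?_⟩
  intro i j hij
  have h1 := hu i
  have h2 := hu j
  have h3 : 0 < (a i - a j) ^ 2 := by
    have := sub_ne_zero.2 (hinj i j hij); positivity
  have h4 : 0 < a i * a j := mul_pos (ha0 i) (ha0 j)
  have h5 : 0 ≤ √(1 - a i ^ 2) * √(1 - a j ^ 2) := by positivity
  constructor
  · nlinarith [sq_nonneg (√(1 - a i ^ 2) - √(1 - a j ^ 2))]
  · linarith

def sg (b : Bool) : ℝ := if b then 1 else -1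

lemma sg_sq (b : Bool) : sg b = 1 ∨ sg b = -1 := by cases b <;> simp [sg]

lemma step {n : ℕ} {ι : Type} [Fintype ι] (x : ι → Fin n → ℝ) (hx : Acute x) :
    ∃ y : ι × Bool → Fin (n + 2) → ℝ, Acute y := by
  classical
  obtain ⟨a, b, hab, hlt⟩ := exists_dirs ι
  obtain ⟨m, hm, hm'⟩ := exists_min_pos
    (fun t : ι × ι × ι => t.2.1 ≠ t.1 ∧ t.2.2 ≠ t.1)
    (fun t => (x t.2.1 - x t.1) ⬝ᵥ (x t.2.2 - x t.1)) (fun t ht => hx _ _ _ ht.1 ht.2)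
  obtain ⟨ε, hε, hεm⟩ : ∃ ε : ℝ, 0 < ε ∧ ε ^ 2 * 4 < m := by
    refine ⟨√(m / 8), by positivity, ?_⟩
    rw [Real.sq_sqrt (by positivity)]; linarith
  have hε2 : 0 < ε ^ 2 := by positivity
  have hle : ∀ i j, a i * a j + b i * b j ≤ 1 ∧ -1 ≤ a i * a j + b i * b j := by
    intro i j
    have := hab i
    have := hab j
    constructor
    · nlinarith [sq_nonneg (a i - a j), sq_nonneg (b i - b j)]
    · nlinarith [sq_nonneg (a i + a j), sq_nonneg (b i + b j)]
  refine ⟨fun p => vecCons (ε * sg p.2 * a p.1) (vecCons (ε * sg p.2 * b p.1) (x p.1)), ?_⟩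
  rintro ⟨i, s⟩ ⟨j, t⟩ ⟨k, r⟩ hj hk
  have hform : ∀ (A A' A'' C C' C'' : ℝ) (u v z : Fin n → ℝ),
      (vecCons A (vecCons C u) - vecCons A'' (vecCons C'' z)) ⬝ᵥ
      (vecCons A' (vecCons C' v) - vecCons A'' (vecCons C'' z)) =
      (A - A'') * (A' - A'') + (C - C'') * (C' - C'') + (u - z) ⬝ᵥ (v - z) := by
    intros
    simp [add_assoc]
  have hgoal : ∀ R : ℝ, R = (x j - x i) ⬝ᵥ (x k - x i) →
      0 < ε ^ 2 * (sg t * sg r * (a j * a k + b j * b k) - sg t * sg s * (a j * a i + b j * b i)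
        - sg s * sg r * (a i * a k + b i * b k) + sg s * sg s * (a i * a i + b i * b i)) + R →
      0 < (vecCons (ε * sg t * a j) (vecCons (ε * sg t * b j) (x j)) -
        vecCons (ε * sg s * a i) (vecCons (ε * sg s * b i) (x i))) ⬝ᵥ
      (vecCons (ε * sg r * a k) (vecCons (ε * sg r * b k) (x k)) -
        vecCons (ε * sg s * a i) (vecCons (ε * sg s * b i) (x i))) := by
    intro R hR h
    rw [hform, ← hR]
    refine h.trans_eq ?_
    ring
  refine hgoal _ rfl ?_
  have hii : a i * a i + b i * b i = 1 := by have := hab i; linarith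
  have hopp : ∀ t' : Bool, t' ≠ s → sg t' = - sg s := by
    intro t' h
    cases t' <;> cases s <;> simp_all [sg]
  have hss : sg s * sg s = 1 := by rcases sg_sq s with h | h <;> rw [h] <;> norm_num
  have hrr : sg r * sg r = 1 := by rcases sg_sq r with h | h <;> rw [h] <;> norm_num
  have htt : sg t * sg t = 1 := by rcases sg_sq t with h | h <;> rw [h] <;> norm_num
  by_cases hji : j = i
  · subst hji
    have ht : sg t = - sg s := hopp t (fun h => hj (by rw [h]))
    by_cases hki : k = j
    · subst hki
      have hr : sg r = - sg s := hopp r (fun h => hk (by rw [h]))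
      rw [ht, hr, hii]
      simp
      nlinarith
    · have h := hlt j k (Ne.symm hki)
      rw [ht, hii]
      simp only [sub_self, zero_dotProduct, add_zero]
      apply mul_pos hε2
      rcases sg_sq s with h1 | h1 <;> rcases sg_sq r with h2 | h2 <;> rw [h1, h2] <;> linarith
  · by_cases hki : k = i
    · subst hki
      have hr : sg r = - sg s := hopp r (fun h => hk (by rw [h]))
      have h := hlt j k hji
      rw [hr, hii]
      simp only [sub_self, dotProduct_zero, add_zero]
      apply mul_pos hε2
      rcases sg_sq s with h1 | h1 <;> rcases sg_sq t with h2 | h2 <;> rw [h1, h2] <;> linarith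
    · have h0 : m ≤ (x j - x i) ⬝ᵥ (x k - x i) := hm' (i, j, k) ⟨hji, hki⟩
      have h1 := hle j k
      have h2 := hle j i
      have h3 := hle i k
      rw [hii]
      have : -4 ≤ (sg t * sg r * (a j * a k + b j * b k) - sg t * sg s * (a j * a i + b j * b i)
        - sg s * sg r * (a i * a k + b i * b k) + sg s * sg s * 1) := by
        rcases sg_sq s with e1 | e1 <;> rcases sg_sq t with e2 | e2 <;>
          rcases sg_sq r with e3 | e3 <;> rw [e1, e2, e3] <;> linarith
      nlinarith

lemma exists_acute : ∀ n : ℕ, ∃ (ι : Type) (_ : Fintype ι) (x : ι → Fin n → ℝ),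
    Acute x ∧ Fintype.card ι = 2 ^ (n / 2)
  | 0 => ⟨Unit, inferInstance, fun _ => 0, fun _ _ _ h => (h rfl).elim, by simp⟩
  | 1 => ⟨Unit, inferInstance, fun _ => 0, fun _ _ _ h => (h rfl).elim, by simp⟩
  | n + 2 => by
    obtain ⟨ι, _, x, hx, hcard⟩ := exists_acute n
    obtain ⟨y, hy⟩ := step x hx
    refine ⟨ι × Bool, inferInstance, y, hy, ?_⟩
    rw [Fintype.card_prod, hcard, Fintype.card_bool, Nat.add_div_right _ (by norm_num), pow_succ]

lemma num_bound (n : ℕ) (hn : 271 ≤ n) : (1.058 : ℝ) ^ n ≤ 2 ^ (n / 2) := by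
  obtain ⟨k, hk⟩ : ∃ k, n / 2 = k + 1 := ⟨n / 2 - 1, by omega⟩
  have h1 : n ≤ 2 * k + 3 := by omega
  rw [hk]
  calc (1.058 : ℝ) ^ n ≤ 1.058 ^ (2 * k + 3) := pow_le_pow_right₀ (by norm_num) h1
    _ = (1.058 ^ 2) ^ k * 1.058 ^ 3 := by rw [pow_add, pow_mul]
    _ ≤ 2 ^ k * 2 := by
      gcongr <;> norm_num
    _ = 2 ^ (k + 1) := by rw [pow_succ]

end EquiSC

theorem strictly_convex_norm_with_large_equilateral_set
    (n : ℕ) (hn : 271 ≤ n) :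
    ∃ N : (Fin n → ℝ) → ℝ,
      (∀ x, 0 ≤ N x) ∧
      (∀ x, N x = 0 ↔ x = 0) ∧
      (∀ (a : ℝ) (x), N (a • x) = |a| * N x) ∧
      (∀ x y, N (x + y) ≤ N x + N y) ∧
      (∀ x y, LinearIndependent ℝ ![x, y] → N (x + y) < N x + N y) ∧
      ∃ S : Finset (Fin n → ℝ),
        (1.058 : ℝ) ^ n ≤ (S.card : ℝ) ∧
        ∃ lam : ℝ, 0 < lam ∧ ∀ x ∈ S, ∀ y ∈ S, x ≠ y → N (x - y) = lam := by
  classical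
  obtain ⟨ι, _, x, hx, hcard⟩ := EquiSC.exists_acute n
  haveI : Nontrivial ι := by
    rw [← Fintype.one_lt_card_iff_nontrivial, hcard]
    exact Nat.one_lt_two_pow (by omega)
  obtain ⟨N, h1, h2, h3, h4, h5, h6⟩ := EquiSC.exists_norm x hx
  have hinj : Function.Injective x := by
    intro i j hij
    by_contra hne
    have := hx j i i hne hne
    simp [hij] at this
  refine ⟨N, h1, h2, h3, h4, h5, Finset.univ.image x, ?_, 1, one_pos, ?_⟩
  · rw [Finset.card_image_of_injective _ hinj, Finset.card_univ, hcard]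
    push_cast
    exact EquiSC.num_bound n hn
  · intro y hy z hz hyz
    simp only [Finset.mem_image, Finset.mem_univ, true_and] at hy hz
    obtain ⟨i, rfl⟩ := hy
    obtain ⟨j, rfl⟩ := hz
    exact h6 i j (fun h => hyz (by rw [h]))
end

section
/- For every δ with 0 < δ < 1 there exists n₀ such that for all n ≥ n₀ there exist a natural number m with m > (1 + δ²/2)^n and vectors w_1, …, w_m in Euclidean space ℝ^n satisfying ⟨w_i, w_i⟩ = 1 for all i and |⟨w_i, w_j⟩| < δ for all i ≠ j. -/
noncomputable def aovSg (b : Bool) : ℝ := if b then 1 else -1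

lemma aovSg_sq (b : Bool) : aovSg b * aovSg b = 1 := by cases b <;> simp [aovSg]

noncomputable def aovIp {n : ℕ} (x y : Fin n → Bool) : ℝ := ∑ i, aovSg (x i) * aovSg (y i)

lemma aovIp_self {n : ℕ} (x : Fin n → Bool) : aovIp x x = n := by
  simp [aovIp, aovSg_sq]

lemma aovIp_comm {n : ℕ} (x y : Fin n → Bool) : aovIp x y = aovIp y x := by
  simp [aovIp, mul_comm]

lemma aov_mgf {n : ℕ} (c : ℝ) (y : Fin n → Bool) :
    ∑ x : Fin n → Bool, Real.exp (c * aovIp x y) ≤ 2 ^ n * Real.exp (n * (c ^ 2 / 2)) := by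
  have h1 : ∀ x : Fin n → Bool,
      Real.exp (c * aovIp x y) = ∏ i, Real.exp (c * (aovSg (x i) * aovSg (y i))) := by
    intro x
    rw [← Real.exp_sum, aovIp, Finset.mul_sum]
  have h2 := Finset.prod_univ_sum (fun _ : Fin n => (Finset.univ : Finset Bool))
    (fun i b => Real.exp (c * (aovSg b * aovSg (y i))))
  rw [Fintype.piFinset_univ] at h2
  simp_rw [h1]
  rw [← h2]
  have h3 : ∀ i : Fin n, ∑ b : Bool, Real.exp (c * (aovSg b * aovSg (y i))) = 2 * Real.cosh c := by
    intro i
    rw [Fintype.sum_bool, Real.cosh_eq]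
    cases y i <;> simp [aovSg] <;> ring
  simp_rw [h3]
  rw [Finset.prod_const, Finset.card_univ, Fintype.card_fin, mul_pow, Real.exp_nat_mul]
  gcongr
  · exact Real.cosh_le_exp_half_sq c

lemma aov_code (n : ℕ) (δ : ℝ) (hδ0 : 0 < δ) (hδ1 : δ < 1) :
    ∃ S : Finset (Fin n → Bool), (∀ x ∈ S, ∀ y ∈ S, x ≠ y → |aovIp x y| < δ * n) ∧
      Real.exp (n * (δ ^ 2 / 2)) ≤ 2 * S.card := by
  classical
  obtain ⟨S, -, hS⟩ := Finite.exists_le_maximal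
    (p := fun S : Finset (Fin n → Bool) => ∀ x ∈ S, ∀ y ∈ S, x ≠ y → |aovIp x y| < δ * n)
    (a := ∅) (by simp)
  refine ⟨S, hS.prop, ?_⟩
  have hcov : ∀ x, ∃ y ∈ S, δ * n ≤ |aovIp x y| := by
    intro x
    by_contra! hx
    have hxS : x ∈ S := by
      refine hS.le_of_ge (y := insert x S) ?_ (Finset.subset_insert x S)
        (Finset.mem_insert_self x S)
      intro a ha b hb hab
      rcases Finset.mem_insert.1 ha with rfl | ha' <;> rcases Finset.mem_insert.1 hb with rfl | hb'
      · exact absurd rfl hab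
      · exact hx b hb'
      · rw [aovIp_comm]; exact hx a ha'
      · exact hS.prop a ha' b hb' hab
    have := hx x hxS
    rw [aovIp_self, abs_of_nonneg (Nat.cast_nonneg n)] at this
    have hn : (0 : ℝ) ≤ n := Nat.cast_nonneg n
    nlinarith
  have key : ∀ x : Fin n → Bool, Real.exp (n * δ ^ 2) ≤
      ∑ y ∈ S, (Real.exp (δ * aovIp x y) + Real.exp ((-δ) * aovIp x y)) := by
    intro x
    obtain ⟨y, hy, hxy⟩ := hcov x
    refine le_trans ?_ (Finset.single_le_sum
      (f := fun y => Real.exp (δ * aovIp x y) + Real.exp ((-δ) * aovIp x y))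
      (fun z _ => by positivity) hy)
    have e1 := Real.exp_pos (δ * aovIp x y)
    have e2 := Real.exp_pos ((-δ) * aovIp x y)
    rcases le_abs.1 hxy with h | h
    · have : Real.exp (n * δ ^ 2) ≤ Real.exp (δ * aovIp x y) :=
        Real.exp_le_exp.2 (by nlinarith)
      linarith
    · have : Real.exp (n * δ ^ 2) ≤ Real.exp ((-δ) * aovIp x y) :=
        Real.exp_le_exp.2 (by nlinarith)
      linarith
  have hsum : (2 : ℝ) ^ n * Real.exp (n * δ ^ 2) ≤
      S.card * (2 * (2 ^ n * Real.exp (n * (δ ^ 2 / 2)))) := by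
    calc (2 : ℝ) ^ n * Real.exp (n * δ ^ 2)
        = ∑ x : Fin n → Bool, Real.exp (n * δ ^ 2) := by simp
      _ ≤ ∑ x : Fin n → Bool, ∑ y ∈ S,
            (Real.exp (δ * aovIp x y) + Real.exp ((-δ) * aovIp x y)) :=
          Finset.sum_le_sum fun x _ => key x
      _ = ∑ y ∈ S, ∑ x : Fin n → Bool,
            (Real.exp (δ * aovIp x y) + Real.exp ((-δ) * aovIp x y)) := Finset.sum_comm
      _ ≤ ∑ y ∈ S, (2 * (2 ^ n * Real.exp (n * (δ ^ 2 / 2)))) := by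
          refine Finset.sum_le_sum fun y _ => ?_
          rw [Finset.sum_add_distrib]
          have a1 := aov_mgf δ y
          have a2 := aov_mgf (-δ) y
          rw [neg_sq] at a2
          linarith
      _ = _ := by simp
  have hsplit : Real.exp (n * δ ^ 2) =
      Real.exp (n * (δ ^ 2 / 2)) * Real.exp (n * (δ ^ 2 / 2)) := by
    rw [← Real.exp_add]; ring_nf
  rw [hsplit] at hsum
  have hp : 0 < (2 : ℝ) ^ n * Real.exp (n * (δ ^ 2 / 2)) := by positivity
  refine le_of_mul_le_mul_left ?_ hp
  linarith

theorem almost_orthogonal_vectors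
    (δ : ℝ) (hδ0 : 0 < δ) (hδ1 : δ < 1) :
    ∃ n₀ : ℕ, ∀ n : ℕ, n₀ ≤ n →
      ∃ m : ℕ, (1 + δ ^ 2 / 2) ^ n < (m : ℝ) ∧
        ∃ w : Fin m → EuclideanSpace ℝ (Fin n),
          (∀ i, (inner ℝ (w i) (w i) : ℝ) = 1) ∧
          (∀ i j, i ≠ j → |(inner ℝ (w i) (w j) : ℝ)| < δ) := by
  have ha : 0 < δ ^ 2 / 2 := by positivity
  have hr : 1 < Real.exp (δ ^ 2 / 2) / (1 + δ ^ 2 / 2) := by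
    rw [one_lt_div (by positivity)]
    have := Real.add_one_lt_exp ha.ne'
    linarith
  obtain ⟨n₀, hn₀⟩ := Filter.eventually_atTop.1
    ((tendsto_pow_atTop_atTop_of_one_lt hr).eventually_gt_atTop 2)
  refine ⟨max n₀ 1, fun n hn => ?_⟩
  have h2 := hn₀ n (le_trans (le_max_left _ _) hn)
  have hn1 : 1 ≤ n := le_trans (le_max_right _ _) hn
  have hnpos : (0 : ℝ) < n := by exact_mod_cast hn1
  rw [div_pow, lt_div_iff₀ (by positivity), ← Real.exp_nat_mul] at h2
  obtain ⟨S, hS, hcard⟩ := aov_code n δ hδ0 hδ1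
  refine ⟨S.card, by linarith, ?_⟩
  let e := S.equivFin.symm
  have hin : ∀ x y : Fin n → Bool,
      (inner ℝ (WithLp.toLp 2 (fun k => aovSg (x k) / √(n : ℝ)) : EuclideanSpace ℝ (Fin n))
        (WithLp.toLp 2 (fun k => aovSg (y k) / √(n : ℝ)) : EuclideanSpace ℝ (Fin n)) : ℝ)
      = aovIp x y / n := by
    intro x y
    rw [PiLp.inner_apply, aovIp, Finset.sum_div]
    refine Finset.sum_congr rfl fun k _ => ?_
    have : √(n : ℝ) * √(n : ℝ) = n := Real.mul_self_sqrt hnpos.le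
    simp only [RCLike.inner_apply, conj_trivial]
    rw [div_mul_div_comm, this, mul_comm]
  refine ⟨fun i => WithLp.toLp 2 (fun k => aovSg ((e i).1 k) / √(n : ℝ)), fun i => ?_,
    fun i j hij => ?_⟩
  · rw [hin, aovIp_self, div_self hnpos.ne']
  · rw [hin, abs_div, abs_of_pos hnpos, div_lt_iff₀ hnpos]
    refine hS _ (e i).2 _ (e j).2 fun h => hij (e.injective (Subtype.ext h))
end

section
/- Let X be a real normed vector space with finrank ℝ X ≥ 2. Then there exist three points a, b, c ∈ X with ‖a − b‖ = ‖b − c‖ = ‖a − c‖ = 1; in particular X contains an equilateral set of 3 points. -/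
open Module

theorem exists_equilateral_triangle
    (X : Type*) [NormedAddCommGroup X] [NormedSpace ℝ X]
    (hdim : 2 ≤ finrank ℝ X) :
    ∃ a b c : X, ‖a - b‖ = 1 ∧ ‖b - c‖ = 1 ∧ ‖a - c‖ = 1 := by
  have hr : 1 < Module.rank ℝ X := by
    have h := Module.lt_rank_of_lt_finrank (R := ℝ) (M := X) (n := 1) (by omega)
    simpa using h
  have : Nontrivial X := Module.nontrivial_of_finrank_pos (R := ℝ) (by omega)
  obtain ⟨u, hu⟩ := exists_norm_eq X (zero_le_one (α := ℝ))
  have hp := isPreconnected_sphere hr (0 : X) 1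
  have h2 : ‖u - -u‖ = 2 := by
    rw [sub_neg_eq_add, ← two_smul ℝ u, norm_smul, hu]; norm_num
  have hiv := hp.intermediate_value (a := u) (b := -u) (f := fun v => ‖u - v‖)
    (by simp [hu]) (by simp [hu]) (by fun_prop)
  obtain ⟨v, hv, hv1⟩ := hiv (show (1 : ℝ) ∈ Set.Icc ‖u - u‖ ‖u - -u‖ by
    rw [h2]; simp)
  refine ⟨u, v, 0, hv1, ?_, by simpa using hu⟩
  simpa using hv
end

section
/- Let X be a real normed vector space of finite dimension 2. Then: (i) X contains an equilateral set of 3 points; (ii) X contains no equilateral set of 5 points; and (iii) X contains an equilateral set of 4 points if and only if X is linearly isometric to ℓ∞², i.e. to (Fin 2 → ℝ) with the supremum norm. -/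
open Module

section helpers
variable {X : Type*} [NormedAddCommGroup X] [NormedSpace ℝ X]

lemma eqs_bound {l s p q : ℝ} {x y z : X} (hl : 0 < l) (hs : 0 ≤ s) (hp : 0 ≤ p) (hq : 0 ≤ q)
    (hx : ‖x‖ = l) (hy : ‖y‖ = l) (hz : ‖z‖ = l) (h : s • x = p • y + q • z) : s ≤ p + q := by
  have h1 : ‖s • x‖ ≤ ‖p • y‖ + ‖q • z‖ := by rw [h]; exact norm_add_le _ _
  rw [norm_smul, norm_smul, norm_smul, hx, hy, hz, Real.norm_of_nonneg hs,
    Real.norm_of_nonneg hp, Real.norm_of_nonneg hq] at h1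
  have : s * l ≤ (p + q) * l := by linarith
  exact le_of_mul_le_mul_right this hl

lemma eqs_22 {l p q r t : ℝ} {a b c d : X} (hl : 0 < l)
    (hab : ‖a - b‖ = l) (hac : ‖a - c‖ = l) (had : ‖a - d‖ = l)
    (hbc : ‖b - c‖ = l) (hbd : ‖b - d‖ = l) (hcd : ‖c - d‖ = l)
    (hp : 0 ≤ p) (hq : 0 ≤ q) (hr : 0 ≤ r) (ht : 0 ≤ t) (hs : 0 < p + q)
    (he : p + q = r + t) (h : p • a + q • b = r • c + t • d) : a + b = c + d := by
  have hba : ‖b - a‖ = l := by rw [norm_sub_rev]; exact hab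
  have hdc : ‖d - c‖ = l := by rw [norm_sub_rev]; exact hcd
  have e1 : p + q ≤ q + t := eqs_bound hl hs.le hq ht hac hab hdc (by
    have : (p + q) • (a - c) - (q • (a - b) + t • (d - c)) = 0 := by
      calc _ = (p • a + q • b) - (p + q - t) • c - t • d := by module
        _ = 0 := by rw [h, he]; module
    exact sub_eq_zero.1 this)
  have e2 : p + q ≤ p + r := eqs_bound hl hs.le hp hr hbd hba hcd (by
    have : (p + q) • (b - d) - (p • (b - a) + r • (c - d)) = 0 := by
      calc _ = (p • a + q • b) - (p + q - r) • d - r • c := by module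
        _ = 0 := by rw [h, he]; module
    exact sub_eq_zero.1 this)
  have e3 : p + q ≤ q + r := eqs_bound hl hs.le hq hr had hab hcd (by
    have : (p + q) • (a - d) - (q • (a - b) + r • (c - d)) = 0 := by
      calc _ = (p • a + q • b) - (p + q - r) • d - r • c := by module
        _ = 0 := by rw [h, he]; module
    exact sub_eq_zero.1 this)
  have e4 : p + q ≤ p + t := eqs_bound hl hs.le hp ht hbc hba hdc (by
    have : (p + q) • (b - c) - (p • (b - a) + t • (d - c)) = 0 := by
      calc _ = (p • a + q • b) - (p + q - t) • c - t • d := by module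
        _ = 0 := by rw [h, he]; module
    exact sub_eq_zero.1 this)
  have f1 : q = p := by linarith
  have f2 : r = p := by linarith
  have f3 : t = p := by linarith
  subst f1 f2 f3
  rw [← smul_add, ← smul_add] at h
  exact smul_right_injective X (by intro h0; simp [h0] at hs : t ≠ 0) h

lemma eqs_13 {l p q r : ℝ} {a b c d : X} (hl : 0 < l)
    (hab : ‖a - b‖ = l) (hac : ‖a - c‖ = l) (had : ‖a - d‖ = l)
    (hbc : ‖b - c‖ = l) (hbd : ‖b - d‖ = l) (hcd : ‖c - d‖ = l)
    (hp : 0 ≤ p) (hq : 0 ≤ q) (hr : 0 ≤ r) (hs : 0 < p + q + r)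
    (h : p • a + q • b + r • c = (p + q + r) • d) : False := by
  have hba : ‖b - a‖ = l := by rw [norm_sub_rev]; exact hab
  have hca : ‖c - a‖ = l := by rw [norm_sub_rev]; exact hac
  have hcb : ‖c - b‖ = l := by rw [norm_sub_rev]; exact hbc
  have e1 : p + q + r ≤ q + r := eqs_bound hl hs.le hq hr had hab hac (by
    rw [smul_sub, ← h]; module)
  have e2 : p + q + r ≤ p + r := eqs_bound hl hs.le hp hr hbd hba hbc (by
    rw [smul_sub, ← h]; module)
  have e3 : p + q + r ≤ p + q := eqs_bound hl hs.le hp hq hcd hca hcb (by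
    rw [smul_sub, ← h]; module)
  linarith

lemma eqs_dep (hdim : finrank ℝ X = 2) (x y z : X) :
    ∃ p q r : ℝ, p • x + q • y + r • z = 0 ∧ ¬ (p = 0 ∧ q = 0 ∧ r = 0) := by
  have : FiniteDimensional ℝ X := FiniteDimensional.of_finrank_pos (by omega)
  have h : ¬ LinearIndependent ℝ ![x, y, z] := by
    intro h
    have := h.fintype_card_le_finrank
    simp [hdim] at this
  rw [Fintype.not_linearIndependent_iff] at h
  obtain ⟨g, hg, i, hi⟩ := h
  refine ⟨g 0, g 1, g 2, by simpa [Fin.sum_univ_three] using hg, ?_⟩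
  rintro ⟨h0, h1, h2⟩
  fin_cases i <;> simp_all

lemma eqs_four (hdim : finrank ℝ X = 2) {l : ℝ} {a b c d : X} (hl : 0 < l)
    (hab : ‖a - b‖ = l) (hac : ‖a - c‖ = l) (had : ‖a - d‖ = l)
    (hbc : ‖b - c‖ = l) (hbd : ‖b - d‖ = l) (hcd : ‖c - d‖ = l) :
    a + b = c + d ∨ a + c = b + d ∨ a + d = b + c := by
  have hba : ‖b - a‖ = l := by rw [norm_sub_rev]; exact hab
  have hca : ‖c - a‖ = l := by rw [norm_sub_rev]; exact hac
  have hcb : ‖c - b‖ = l := by rw [norm_sub_rev]; exact hbc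
  have hda : ‖d - a‖ = l := by rw [norm_sub_rev]; exact had
  have hdb : ‖d - b‖ = l := by rw [norm_sub_rev]; exact hbd
  have hdc : ‖d - c‖ = l := by rw [norm_sub_rev]; exact hcd
  obtain ⟨p, q, r, h, hn⟩ := eqs_dep hdim (a - d) (b - d) (c - d)
  -- reduce to p ≥ 0
  wlog hp : 0 ≤ p generalizing p q r
  · refine this (-p) (-q) (-r) ?_ ?_ (by linarith)
    · calc _ = -(p • (a - d) + q • (b - d) + r • (c - d)) := by module
        _ = 0 := by rw [h, neg_zero]
    · simpa using hn
  have key : p • a + q • b + r • c = (p + q + r) • d := by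
    rw [← sub_eq_zero, ← h]; module
  have hn' : 0 < p ∨ 0 < |q| ∨ 0 < |r| := by
    by_contra! hc
    exact hn ⟨le_antisymm hc.1 hp, abs_nonpos_iff.1 hc.2.1, abs_nonpos_iff.1 hc.2.2⟩
  rcases le_total 0 q with hq | hq <;> rcases le_total 0 r with hr | hr <;>
    simp only [abs_of_nonneg, abs_of_nonpos, hq, hr] at hn'
  · exact (eqs_13 hl hab hac had hbc hbd hcd hp hq hr (by grind) key).elim
  · rcases le_total 0 (p + q + r) with ht | ht
    · left
      exact eqs_22 (p := p) (q := q) (r := -r) (t := p + q + r) hl hab hac had hbc hbd hcd hp hq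
        (by linarith) ht (by grind) (by ring) (by rw [← key]; module)
    · exfalso
      refine eqs_13 (p := p) (q := q) (r := -(p + q + r)) hl hab had hac hbd hbc hdc hp hq
        (by linarith) (by grind) ?_
      rw [neg_smul, ← key]; module
  · rcases le_total 0 (p + q + r) with ht | ht
    · right; left
      exact eqs_22 (p := p) (q := r) (r := -q) (t := p + q + r) hl hac hab had hcb hcd hbd hp hr
        (by linarith) ht (by grind) (by ring) (by rw [← key]; module)
    · exfalso
      refine eqs_13 (p := p) (q := r) (r := -(p + q + r)) hl hac had hab hcd hcb hdb hp hr
        (by linarith) (by grind) ?_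
      rw [neg_smul, ← key]; module
  · rcases le_total 0 (p + q + r) with ht | ht
    · exfalso
      refine eqs_13 (p := -q) (q := -r) (r := p + q + r) (d := a) hl hbc hbd hba hcd hca hda
        (by linarith) (by linarith) ht (by grind) ?_
      rw [← key]; module
    · right; right
      exact eqs_22 (p := p) (q := -(p + q + r)) (r := -q) (t := -r) hl had hab hac hdb hdc hbc hp
        (by linarith) (by linarith) (by linarith) (by grind) (by ring)
        (by rw [neg_smul, ← key]; module)

lemma eqs_norm {e f : X} (he : ‖e‖ = 1) (hf : ‖f‖ = 1) (hs : ‖e + f‖ = 1) (hd : ‖e - f‖ = 1)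
    (x y : ℝ) : ‖x • e + y • f‖ = max |x| |y| := by
  have up : ∀ x y : ℝ, ‖x • e + y • f‖ ≤ max |x| |y| := by
    intro x y
    have h : x • e + y • f = ((x + y) / 2) • (e + f) + ((x - y) / 2) • (e - f) := by module
    rw [h]
    refine (norm_add_le _ _).trans ?_
    rw [norm_smul, norm_smul, hs, hd, Real.norm_eq_abs, Real.norm_eq_abs]
    grind
  apply le_antisymm (up x y)
  have h1 : ‖(2 * x) • e‖ ≤ ‖x • e + y • f‖ + ‖x • e + (-y) • f‖ := by
    refine le_trans (le_of_eq ?_) (norm_add_le _ _)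
    congr 1; module
  have h2 : ‖(2 * y) • f‖ ≤ ‖x • e + y • f‖ + ‖(-x) • e + y • f‖ := by
    refine le_trans (le_of_eq ?_) (norm_add_le _ _)
    congr 1; module
  have u1 := up x (-y)
  have u2 := up (-x) y
  rw [abs_neg] at u1 u2
  rw [norm_smul, he, Real.norm_eq_abs, abs_mul, abs_two] at h1
  rw [norm_smul, hf, Real.norm_eq_abs, abs_mul, abs_two] at h2
  grind

lemma eqs_sup (v : PiLp ⊤ (fun _ : Fin 2 => ℝ)) : ‖v‖ = max |v 0| |v 1| := by
  rw [PiLp.norm_eq_ciSup]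
  apply le_antisymm
  · apply ciSup_le
    intro i
    fin_cases i <;> simp
  · have hb : BddAbove (Set.range fun i : Fin 2 => ‖v i‖) := (Set.finite_range _).bddAbove
    exact max_le (le_ciSup hb 0) (le_ciSup hb 1)

lemma eqs_iso (hdim : finrank ℝ X = 2) {l : ℝ} {a b c d : X} (hl : 0 < l)
    (hab : ‖a - b‖ = l) (hac : ‖a - c‖ = l) (had : ‖a - d‖ = l)
    (hcd : ‖c - d‖ = l) (h : a + b = c + d) :
    Nonempty (X ≃ₗᵢ[ℝ] PiLp ⊤ (fun _ : Fin 2 => ℝ)) := by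
  have : FiniteDimensional ℝ X := FiniteDimensional.of_finrank_pos (by omega)
  have nn : ∀ x : X, ‖x‖ = l → ‖l⁻¹ • x‖ = 1 := by
    intro x hx
    rw [norm_smul, hx, norm_inv, Real.norm_of_nonneg hl.le, inv_mul_cancel₀ hl.ne']
  have hN := eqs_norm (e := l⁻¹ • (a - c)) (f := l⁻¹ • (a - d)) (nn _ hac) (nn _ had)
    (by
      rw [← smul_add]; apply nn
      rw [← hab]; congr 1
      have : b = c + d - a := by rw [← h]; abel
      rw [this]; abel)
    (by
      rw [← smul_sub]; apply nn
      rw [← hcd, norm_sub_rev]; congr 1; abel)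
  let L : PiLp ⊤ (fun _ : Fin 2 => ℝ) →ₗ[ℝ] X :=
    { toFun := fun v => v 0 • (l⁻¹ • (a - c)) + v 1 • (l⁻¹ • (a - d))
      map_add' := by intro v w; simp only [PiLp.add_apply]; module
      map_smul' := by intro t v; simp only [PiLp.smul_apply, smul_eq_mul, RingHom.id_apply]; module }
  let I : PiLp ⊤ (fun _ : Fin 2 => ℝ) →ₗᵢ[ℝ] X :=
    { toLinearMap := L
      norm_map' := by
        intro v
        rw [eqs_sup]
        exact hN _ _ }
  have hf : finrank ℝ (PiLp ⊤ (fun _ : Fin 2 => ℝ)) = finrank ℝ X := by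
    rw [hdim, LinearEquiv.finrank_eq (WithLp.linearEquiv ⊤ ℝ (Fin 2 → ℝ))]; simp
  exact ⟨(I.toLinearIsometryEquiv hf).symm⟩

lemma eqs_three (hdim : finrank ℝ X = 2) : ∃ u v : X, ‖u‖ = 1 ∧ ‖v‖ = 1 ∧ ‖u - v‖ = 1 := by
  have : FiniteDimensional ℝ X := FiniteDimensional.of_finrank_pos (by omega)
  have : Nontrivial X := Module.nontrivial_of_finrank_pos (R := ℝ) (by omega)
  obtain ⟨u, hu⟩ := exists_norm_eq X (zero_le_one (α := ℝ))
  have hr : 1 < Module.rank ℝ X := by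
    rw [← Module.finrank_eq_rank, hdim]; norm_num
  have hc := (isConnected_sphere hr (0 : X) zero_le_one).isPreconnected
  have hm := hc.intermediate_value (a := u) (b := -u) (by simp [hu]) (by simp [hu])
    (f := fun v => ‖u - v‖) (by fun_prop)
  have : (1 : ℝ) ∈ Set.Icc ‖u - u‖ ‖u - -u‖ := by
    have : ‖u - -u‖ = 2 := by
      rw [sub_neg_eq_add, ← two_smul ℝ u, norm_smul, hu]; norm_num
    rw [this]; simp
  obtain ⟨v, hv, h1⟩ := hm this
  exact ⟨u, v, hu, by simpa using hv, h1⟩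

end helpers

theorem equilateral_sets_in_dim_two
    (X : Type*) [NormedAddCommGroup X] [NormedSpace ℝ X]
    (hdim : finrank ℝ X = 2) :
    (∃ S : Finset X, S.card = 3 ∧
      ∃ lam : ℝ, 0 < lam ∧ ∀ x ∈ S, ∀ y ∈ S, x ≠ y → ‖x - y‖ = lam) ∧
    (¬ ∃ S : Finset X, S.card = 5 ∧
      ∃ lam : ℝ, 0 < lam ∧ ∀ x ∈ S, ∀ y ∈ S, x ≠ y → ‖x - y‖ = lam) ∧
    ((∃ S : Finset X, S.card = 4 ∧
      ∃ lam : ℝ, 0 < lam ∧ ∀ x ∈ S, ∀ y ∈ S, x ≠ y → ‖x - y‖ = lam) ↔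
      Nonempty (X ≃ₗᵢ[ℝ] PiLp ⊤ (fun _ : Fin 2 => ℝ))) := by
  classical
  have ne : ∀ x y : X, ‖x - y‖ = 1 → x ≠ y := by
    rintro x y h rfl
    simp at h
  refine ⟨?_, ?_, ?_, ?_⟩
  · obtain ⟨u, v, hu, hv, huv⟩ := eqs_three hdim
    have h1 : ‖u - 0‖ = 1 := by simpa using hu
    have h2 : ‖v - 0‖ = 1 := by simpa using hv
    refine ⟨{u, v, 0}, Finset.card_eq_three.2 ⟨u, v, 0, ne _ _ huv, ne _ _ h1, ne _ _ h2, rfl⟩,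
      1, one_pos, ?_⟩
    have h1' := norm_sub_rev u 0
    have h2' := norm_sub_rev v 0
    have h3' := norm_sub_rev u v
    simp only [Finset.mem_insert, Finset.mem_singleton]
    grind
  · rintro ⟨S, hS, l, hl, H⟩
    obtain ⟨g⟩ : Nonempty (Fin 5 ≃ S) := ⟨(Finset.equivFinOfCardEq hS).symm⟩
    have D : ∀ i j : Fin 5, i ≠ j → ‖(g i : X) - g j‖ = l := fun i j hij =>
      H _ (g i).2 _ (g j).2 (fun h => hij (g.injective (Subtype.ext h)))
    have five : ∀ a b c d e : X, ‖a - b‖ = l → ‖a - c‖ = l → ‖a - d‖ = l → ‖a - e‖ = l →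
        ‖b - c‖ = l → ‖b - d‖ = l → ‖b - e‖ = l → ‖c - d‖ = l → ‖c - e‖ = l → ‖d - e‖ = l →
        a + b = c + d → False := by
      intro a b c d e hab hac had hae hbc hbd hbe hcd hce hde h
      have two : ∀ x : X, ‖x - d‖ = l → d - e = (2 : ℝ) • (d - x) → False := by
        intro x hx h2
        rw [h2, norm_smul, norm_sub_rev, hx] at hde
        norm_num at hde
        linarith
      have hd : d = a + b - c := by rw [h]; abel
      rcases eqs_four hdim hl hab hac hae hbc hbe hce with h' | h' | h'
      · have : d = e := add_left_cancel (h.symm.trans h')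
        rw [this] at hde; simp at hde; linarith
      · have he : e = a + c - b := by rw [h']; abel
        apply two a had
        rw [hd, he]; module
      · have he : e = b + c - a := by rw [← h']; abel
        apply two b hbd
        rw [hd, he]; module
    have d01 := D 0 1 (by decide)
    have d02 := D 0 2 (by decide)
    have d03 := D 0 3 (by decide)
    have d04 := D 0 4 (by decide)
    have d12 := D 1 2 (by decide)
    have d13 := D 1 3 (by decide)
    have d14 := D 1 4 (by decide)
    have d23 := D 2 3 (by decide)
    have d24 := D 2 4 (by decide)
    have d34 := D 3 4 (by decide)
    have d21 := D 2 1 (by decide)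
    have d31 := D 3 1 (by decide)
    have d32 := D 3 2 (by decide)
    rcases eqs_four hdim hl d01 d02 d03 d12 d13 d23 with h | h | h
    · exact five _ _ _ _ _ d01 d02 d03 d04 d12 d13 d14 d23 d24 d34 h
    · exact five _ _ _ _ _ d02 d01 d03 d04 d21 d23 d24 d13 d14 d34 h
    · exact five _ _ _ _ _ d03 d01 d02 d04 d31 d32 d34 d12 d14 d24 h
  · rintro ⟨S, hS, l, hl, H⟩
    obtain ⟨g⟩ : Nonempty (Fin 4 ≃ S) := ⟨(Finset.equivFinOfCardEq hS).symm⟩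
    have D : ∀ i j : Fin 4, i ≠ j → ‖(g i : X) - g j‖ = l := fun i j hij =>
      H _ (g i).2 _ (g j).2 (fun h => hij (g.injective (Subtype.ext h)))
    have d01 := D 0 1 (by decide)
    have d02 := D 0 2 (by decide)
    have d03 := D 0 3 (by decide)
    have d12 := D 1 2 (by decide)
    have d13 := D 1 3 (by decide)
    have d23 := D 2 3 (by decide)
    rcases eqs_four hdim hl d01 d02 d03 d12 d13 d23 with h | h | h
    · exact eqs_iso hdim hl d01 d02 d03 d23 h
    · exact eqs_iso hdim hl d02 d01 d03 d13 h
    · exact eqs_iso hdim hl d03 d01 d02 d12 h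
  · rintro ⟨T⟩
    let P : ℝ → ℝ → X := fun x y => T.symm (WithLp.toLp ⊤ ![x, y])
    have hP : ∀ x y z w : ℝ, ‖P x y - P z w‖ = max |x - z| |y - w| := by
      intro x y z w
      simp only [P]
      rw [← map_sub, LinearIsometryEquiv.norm_map, eqs_sup]
      simp
    have h1 : ‖P 0 0 - P 0 1‖ = 1 := by rw [hP]; norm_num
    have h2 : ‖P 0 0 - P 1 0‖ = 1 := by rw [hP]; norm_num
    have h3 : ‖P 0 0 - P 1 1‖ = 1 := by rw [hP]; norm_num
    have h4 : ‖P 0 1 - P 1 0‖ = 1 := by rw [hP]; norm_num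
    have h5 : ‖P 0 1 - P 1 1‖ = 1 := by rw [hP]; norm_num
    have h6 : ‖P 1 0 - P 1 1‖ = 1 := by rw [hP]; norm_num
    generalize P 0 0 = a at *
    generalize P 0 1 = b at *
    generalize P 1 0 = c at *
    generalize P 1 1 = d at *
    refine ⟨{a, b, c, d}, ?_, 1, one_pos, ?_⟩
    · simp [ne _ _ h1, ne _ _ h2, ne _ _ h3, ne _ _ h4, ne _ _ h5, ne _ _ h6]
    · have k1 := norm_sub_rev a b
      have k2 := norm_sub_rev a c
      have k3 := norm_sub_rev a d
      have k4 := norm_sub_rev b c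
      have k5 := norm_sub_rev b d
      have k6 := norm_sub_rev c d
      simp only [Finset.mem_insert, Finset.mem_singleton]
      grind
end

section
/- Let X be a real normed vector space with finrank ℝ X ≥ 3, let λ > 0, and let a, b, c ∈ X satisfy ‖a − b‖ = ‖b − c‖ = ‖a − c‖ = λ. Then there exists a point d ∈ X, distinct from a, b, c, with ‖d − a‖ = ‖d − b‖ = ‖d − c‖ = λ; that is, every equilateral set of size 3 in X extends to an equilateral set of size 4. -/
open Module

lemma aux_strict {X : Type*} [NormedAddCommGroup X] [NormedSpace ℝ X] {L β : ℝ} {y z : X}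
    (hy : ‖y‖ < L) (hz : ‖z‖ ≤ L) (h0 : 0 ≤ β) (h1 : β < 1) : ‖(1 - β) • y + β • z‖ < L := by
  have h := norm_add_le ((1 - β) • y) (β • z)
  rw [norm_smul, norm_smul, Real.norm_of_nonneg h0, Real.norm_of_nonneg (by linarith)] at h
  nlinarith

lemma aux_weak {X : Type*} [NormedAddCommGroup X] [NormedSpace ℝ X] {L β : ℝ} {y z : X}
    (hy : ‖y‖ ≤ L) (hz : ‖z‖ ≤ L) (h0 : 0 ≤ β) (h1 : β ≤ 1) : ‖(1 - β) • y + β • z‖ ≤ L := by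
  have h := norm_add_le ((1 - β) • y) (β • z)
  rw [norm_smul, norm_smul, Real.norm_of_nonneg h0, Real.norm_of_nonneg (by linarith)] at h
  nlinarith

lemma aux_A {X : Type*} [NormedAddCommGroup X] [NormedSpace ℝ X] {L μ τ : ℝ} {p u : X}
    (hL : 0 < L) (hu : ‖u‖ = L / 2) (hμ0 : 0 ≤ μ) (hμ1 : μ < 1) (hτ : 0 ≤ τ)
    (h1 : ‖p + u‖ ≤ L) (h2 : ‖p - u‖ ≤ L) (h3 : ‖(μ • p + τ • u) + u‖ ≤ L) :
    ‖(μ • p + τ • u) - u‖ < L := by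
  have hp : ‖p‖ ≤ L := by
    have := aux_weak (β := 1 / 2) h1 h2 (by norm_num) (by norm_num)
    have e : (1 - (1 / 2 : ℝ)) • (p + u) + (1 / 2 : ℝ) • (p - u) = p := by module
    rwa [e] at this
  have hmp : ‖μ • p‖ < L := by
    rw [norm_smul, Real.norm_of_nonneg hμ0]; nlinarith
  have hu2 : ‖(-2 : ℝ) • u‖ ≤ L := by
    rw [norm_smul, hu]; norm_num; linarith
  rcases le_total τ 1 with h | h
  · have hz := aux_weak (β := μ) hu2 h2 hμ0 hμ1.le
    have hh : 0 < 2 - μ := by linarith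
    have := aux_strict (β := (1 - τ) / (2 - μ)) hmp hz (by apply div_nonneg <;> linarith)
      (by rw [div_lt_one hh]; linarith)
    convert this using 2
    match_scalars <;> field_simp <;> ring
  · have hh : 0 < τ + 1 := by linarith
    have := aux_strict (β := (τ - 1) / (τ + 1)) hmp h3 (by apply div_nonneg <;> linarith)
      (by rw [div_lt_one hh]; linarith)
    convert this using 2
    match_scalars <;> field_simp <;> ring

lemma aux_max {X : Type*} [NormedAddCommGroup X] [NormedSpace ℝ X] {L s t s' t' : ℝ} {v u : X}
    (hL : 0 < L) (hu : ‖u‖ = L / 2) (hs : 0 ≤ s)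
    (h1 : ‖(s • v + t • u) + u‖ = L) (h2 : ‖(s • v + t • u) - u‖ = L)
    (h3 : ‖(s' • v + t' • u) + u‖ ≤ L) (h4 : ‖(s' • v + t' • u) - u‖ ≤ L) : s' ≤ s := by
  by_contra! hlt
  have hs' : 0 < s' := by linarith
  have hμ0 : 0 ≤ s / s' := by positivity
  have hμ1 : s / s' < 1 := by rw [div_lt_one hs']; exact hlt
  have e : s • v + t • u = (s / s') • (s' • v + t' • u) + (t - (s / s') * t') • u := by
    match_scalars <;> field_simp <;> ring
  have e' : s • v + t • u = (s / s') • (s' • v + t' • u) + (-(t - (s / s') * t')) • (-u) := by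
    rw [e]; module
  rcases le_total 0 (t - (s / s') * t') with h | h
  · have := aux_A hL hu hμ0 hμ1 h h3 h4 (by rw [← e]; exact h1.le)
    rw [← e] at this
    linarith
  · have := aux_A (u := -u) hL (by rwa [norm_neg]) hμ0 hμ1 (neg_nonneg.2 h)
      (by rw [← sub_eq_add_neg]; exact h4)
      (by rw [sub_neg_eq_add]; exact h3) (by rw [← e', ← sub_eq_add_neg]; exact h2.le)
    rw [← e', sub_neg_eq_add] at this
    linarith

lemma aux_B0 {X : Type*} [NormedAddCommGroup X] [NormedSpace ℝ X] {L s t : ℝ} {v u : X}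
    (hm : ∀ s' t' : ℝ, ‖(s' • v + t' • u) + u‖ ≤ L → ‖(s' • v + t' • u) - u‖ ≤ L → s' ≤ s)
    (h1 : ‖(s • v + t • u) + u‖ < L) (h2 : ‖(s • v + t • u) - u‖ < L) : False := by
  have c1 : Continuous fun s : ℝ => ‖(s • v + t • u) + u‖ := by fun_prop
  have c2 : Continuous fun s : ℝ => ‖(s • v + t • u) - u‖ := by fun_prop
  have e1 := c1.continuousAt.eventually_lt (continuousAt_const (y := L)) h1
  have e2 := c2.continuousAt.eventually_lt (continuousAt_const (y := L)) h2
  obtain ⟨r, hr, h⟩ := Metric.eventually_nhds_iff.1 (e1.and e2)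
  have := h (y := s + r / 2) (by simp [Real.dist_eq, abs_of_pos hr]; linarith)
  have := hm _ _ this.1.le this.2.le
  linarith

lemma aux_B1 {X : Type*} [NormedAddCommGroup X] [NormedSpace ℝ X] {L s t : ℝ} {v u : X}
    (hm : ∀ s' t' : ℝ, ‖(s' • v + t' • u) + u‖ ≤ L → ‖(s' • v + t' • u) - u‖ ≤ L → s' ≤ s)
    (h1 : ‖(s • v + t • u) + u‖ ≤ L) (h2 : ‖(s • v + t • u) - u‖ ≤ L) :
    ‖(s • v + t • u) + u‖ = L := by
  by_contra hne
  have h1' := lt_of_le_of_ne h1 hne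
  have c1 : Continuous fun t : ℝ => ‖(s • v + t • u) + u‖ := by fun_prop
  have e1 := c1.continuousAt.eventually_lt (continuousAt_const (y := L)) h1'
  obtain ⟨r, hr, h⟩ := Metric.eventually_nhds_iff.1 e1
  set ε := min (r / 2) 1 with hε
  have hε0 : 0 < ε := by positivity
  have hεr : ε ≤ r / 2 := min_le_left _ _
  have hε1 : ε ≤ 1 := min_le_right _ _
  have k1 := h (y := t + ε) (by simp [Real.dist_eq, abs_of_pos hε0]; linarith)
  have k2 := aux_strict (β := 1 - ε / 2) h1' h2 (by linarith) (by linarith)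
  refine aux_B0 (t := t + ε) hm k1 ?_
  convert k2 using 2
  module

lemma aux_B {X : Type*} [NormedAddCommGroup X] [NormedSpace ℝ X] {L s t : ℝ} {v u : X}
    (hm : ∀ s' t' : ℝ, ‖(s' • v + t' • u) + u‖ ≤ L → ‖(s' • v + t' • u) - u‖ ≤ L → s' ≤ s)
    (h1 : ‖(s • v + t • u) + u‖ ≤ L) (h2 : ‖(s • v + t • u) - u‖ ≤ L) :
    ‖(s • v + t • u) + u‖ = L ∧ ‖(s • v + t • u) - u‖ = L := by
  refine ⟨aux_B1 hm h1 h2, ?_⟩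
  have := aux_B1 (u := -u) (t := -t) (s := s) (v := v) (L := L) ?_ ?_ ?_
  · simpa [sub_eq_add_neg] using this
  · intro s' t' k1 k2
    apply hm s' (-t')
    · simpa [sub_eq_add_neg] using k2
    · simpa [sub_eq_add_neg] using k1
  · simpa [sub_eq_add_neg] using h2
  · simpa [sub_eq_add_neg] using h1

/-- existence on each half plane -/
lemma aux_exists {X : Type*} [NormedAddCommGroup X] [NormedSpace ℝ X] {L M : ℝ} {v u : X}
    (hL : 0 < L) (hu : ‖u‖ = L / 2)
    (hM : ∀ s t : ℝ, ‖s • v + t • u‖ ≤ L → |s| ≤ M ∧ |t| ≤ M) :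
    ∃ s t : ℝ, 0 ≤ s ∧ ‖(s • v + t • u) + u‖ = L ∧ ‖(s • v + t • u) - u‖ = L := by
  have hmid : ∀ p : X, ‖p + u‖ ≤ L → ‖p - u‖ ≤ L → ‖p‖ ≤ L := by
    intro p h1 h2
    have := aux_weak (β := 1 / 2) h1 h2 (by norm_num) (by norm_num)
    have e : (1 - (1 / 2 : ℝ)) • (p + u) + (1 / 2 : ℝ) • (p - u) = p := by module
    rwa [e] at this
  let C : Set (ℝ × ℝ) := {q | ‖(q.1 • v + q.2 • u) + u‖ ≤ L ∧ ‖(q.1 • v + q.2 • u) - u‖ ≤ L}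
  have hCc : IsClosed C := by
    have c1 : Continuous fun q : ℝ × ℝ => ‖(q.1 • v + q.2 • u) + u‖ := by fun_prop
    have c2 : Continuous fun q : ℝ × ℝ => ‖(q.1 • v + q.2 • u) - u‖ := by fun_prop
    exact (isClosed_le c1 continuous_const).inter (isClosed_le c2 continuous_const)
  have hC : IsCompact C := by
    apply (isCompact_Icc.prod isCompact_Icc : IsCompact (Set.Icc (-M) M ×ˢ Set.Icc (-M) M)).of_isClosed_subset hCc
    rintro ⟨s, t⟩ ⟨h1, h2⟩
    obtain ⟨k1, k2⟩ := hM s t (hmid _ h1 h2)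
    exact ⟨abs_le.1 k1, abs_le.1 k2⟩
  have h0 : ((0 : ℝ), (0 : ℝ)) ∈ C := by
    constructor <;> simp [hu] <;> linarith
  obtain ⟨⟨s, t⟩, hst, hmax⟩ := hC.exists_isMaxOn ⟨_, h0⟩ (continuous_fst.continuousOn)
  refine ⟨s, t, hmax h0, aux_B ?_ hst.1 hst.2⟩
  intro s' t' k1 k2
  exact hmax (show (s', t') ∈ C from ⟨k1, k2⟩)

lemma aux_convex {X : Type*} [NormedAddCommGroup X] [NormedSpace ℝ X] {L : ℝ} {v u : X}
    (hL : 0 < L) (hu : ‖u‖ = L / 2) :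
    Convex ℝ {q : ℝ × ℝ | 0 ≤ q.1 ∧ ‖(q.1 • v + q.2 • u) + u‖ = L ∧
      ‖(q.1 • v + q.2 • u) - u‖ = L} := by
  rintro ⟨s, t⟩ ⟨h0, h1, h2⟩ ⟨s', t'⟩ ⟨h0', h1', h2'⟩ α β hα hβ hab
  have hss : s' = s := le_antisymm (aux_max hL hu h0 h1 h2 h1'.le h2'.le)
    (aux_max hL hu h0' h1' h2' h1.le h2.le)
  subst hss
  simp only at h0 h1 h2 h0' h1' h2'
  have hα' : α = 1 - β := by linarith
  subst hα'
  have e : (1 - β) • (s', t) + β • (s', t') = (s', (1 - β) * t + β * t') := by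
    ext <;> simp; ring
  rw [e]
  refine ⟨h0, aux_B ?_ ?_ ?_⟩
  · intro s'' t'' k1 k2
    exact aux_max hL hu h0 h1 h2 k1 k2
  · convert aux_weak h1.le h1'.le hβ (by linarith) using 2
    module
  · convert aux_weak h2.le h2'.le hβ (by linarith) using 2
    module

lemma aux_core {X : Type*} [NormedAddCommGroup X] [NormedSpace ℝ X] {L M : ℝ} {u c : X}
    (v : ℝ → X) (hv : Continuous v) (hv1 : v 1 = c) (hv2 : v (-1) = -c)
    (hL : 0 < L) (hu : ‖u‖ = L / 2) (hc1 : ‖c + u‖ = L) (hc2 : ‖c - u‖ = L)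
    (hM : ∀ x ∈ Set.Icc (-1 : ℝ) 1, ∀ s t : ℝ, ‖s • v x + t • u‖ ≤ L → |s| ≤ M ∧ |t| ≤ M) :
    ∃ p : X, ‖p + u‖ = L ∧ ‖p - u‖ = L ∧ ‖p - c‖ = L := by
  let Z : Set (ℝ × ℝ × ℝ) := {q | q.1 ∈ Set.Icc (-1 : ℝ) 1 ∧ 0 ≤ q.2.1 ∧
    ‖(q.2.1 • v q.1 + q.2.2 • u) + u‖ = L ∧ ‖(q.2.1 • v q.1 + q.2.2 • u) - u‖ = L}
  have hZc : IsClosed Z := by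
    have c0 : Continuous fun q : ℝ × ℝ × ℝ => q.2.1 := by fun_prop
    have c1 : Continuous fun q : ℝ × ℝ × ℝ => ‖(q.2.1 • v q.1 + q.2.2 • u) + u‖ := by fun_prop
    have c2 : Continuous fun q : ℝ × ℝ × ℝ => ‖(q.2.1 • v q.1 + q.2.2 • u) - u‖ := by fun_prop
    exact (isClosed_Icc.preimage continuous_fst).inter ((isClosed_le continuous_const c0).inter
      ((isClosed_eq c1 continuous_const).inter (isClosed_eq c2 continuous_const)))
  have hZ : IsCompact Z := by
    apply (isCompact_Icc.prod (isCompact_Icc.prod isCompact_Icc) : IsCompact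
      (Set.Icc (-1 : ℝ) 1 ×ˢ (Set.Icc (-M) M ×ˢ Set.Icc (-M) M))).of_isClosed_subset hZc
    rintro ⟨x, s, t⟩ ⟨hx, h0, h1, h2⟩
    have := aux_weak (β := 1 / 2) h1.le h2.le (by norm_num) (by norm_num)
    have e : ∀ p : X, (1 - (1 / 2 : ℝ)) • (p + u) + (1 / 2 : ℝ) • (p - u) = p := by
      intro p; module
    rw [e] at this
    obtain ⟨k1, k2⟩ := hM x hx s t this
    exact ⟨hx, abs_le.1 k1, abs_le.1 k2⟩
  let g : ℝ × ℝ × ℝ → ℝ := fun q => ‖(q.2.1 • v q.1 + q.2.2 • u) - c‖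
  have hg : Continuous g := by fun_prop
  have hA : IsClosed (Prod.fst '' (Z ∩ {q | g q ≤ L})) :=
    ((hZ.inter_right (isClosed_le hg continuous_const)).image continuous_fst).isClosed
  have hB : IsClosed (Prod.fst '' (Z ∩ {q | L ≤ g q})) :=
    ((hZ.inter_right (isClosed_le continuous_const hg)).image continuous_fst).isClosed
  have hconn : IsPreconnected (Set.Icc (-1 : ℝ) 1) := isPreconnected_Icc
  have key : (Set.Icc (-1 : ℝ) 1 ∩ ((Prod.fst '' (Z ∩ {q | g q ≤ L})) ∩
      (Prod.fst '' (Z ∩ {q | L ≤ g q})))).Nonempty := by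
    refine isPreconnected_closed_iff.1 hconn _ _ hA hB ?_ ?_ ?_
    · intro x hx
      obtain ⟨s, t, h⟩ := aux_exists hL hu (hM x hx)
      rcases le_total (g (x, s, t)) L with h' | h'
      · exact Or.inl ⟨(x, s, t), ⟨⟨hx, h⟩, h'⟩, rfl⟩
      · exact Or.inr ⟨(x, s, t), ⟨⟨hx, h⟩, h'⟩, rfl⟩
    · refine ⟨1, by simp, (1, 1, 0), ⟨⟨by simp, by simp, ?_, ?_⟩, ?_⟩, rfl⟩
      · simpa [hv1] using hc1
      · simpa [hv1] using hc2
      · simp [g, hv1, hL.le]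
    · refine ⟨-1, by simp, (-1, 1, 0), ⟨⟨by simp, by simp, ?_, ?_⟩, ?_⟩, rfl⟩
      · simp only [hv2, one_smul, zero_smul, add_zero]
        rw [← hc2, ← norm_neg]; congr 1; abel
      · simp only [hv2, one_smul, zero_smul, add_zero]
        rw [← hc1, ← norm_neg]; congr 1; abel
      · simp only [g, Set.mem_setOf_eq, hv2, one_smul, zero_smul, add_zero]
        have h1 : (2 : ℝ) • (c - u) = -(-c - c) - (2 : ℝ) • u := by module
        have h2 := norm_sub_le (-(-c - c)) ((2 : ℝ) • u)
        rw [← h1, norm_smul, norm_smul, norm_neg, hc2, hu] at h2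
        norm_num at h2
        linarith
  obtain ⟨x, hx, ⟨⟨x1, q1⟩, ⟨hq1, hg1⟩, rfl⟩, ⟨⟨x2, q2⟩, ⟨hq2, hg2⟩, hxx⟩⟩ :=
    key
  simp only at hxx
  subst hxx
  have hcv := (aux_convex (v := v x2) hL hu).isPreconnected
  obtain ⟨q, hq, hgq⟩ := hcv.intermediate_value (f := fun q => g (x2, q))
    (a := q1) (b := q2) hq1.2 hq2.2 (by fun_prop) (show L ∈ _ from ⟨hg1, hg2⟩)
  exact ⟨_, hq.2.1, hq.2.2, hgq⟩

lemma aux_indep {X : Type*} [NormedAddCommGroup X] [NormedSpace ℝ X] {L : ℝ} {u c : X}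
    (hL : 0 < L) (hu : ‖u‖ = L / 2) (hc1 : ‖c + u‖ = L) (hc2 : ‖c - u‖ = L) :
    LinearIndependent ℝ ![u, c] := by
  have hu0 : u ≠ 0 := by
    rintro rfl; simp at hu; linarith
  rw [LinearIndependent.pair_iff' hu0]
  rintro k rfl
  have e1 : k • u + u = (k + 1) • u := by module
  have e2 : k • u - u = (k - 1) • u := by module
  rw [e1, norm_smul, hu, Real.norm_eq_abs] at hc1
  rw [e2, norm_smul, hu, Real.norm_eq_abs] at hc2
  have a1 : |k + 1| = 2 := by nlinarith
  have a2 : |k - 1| = 2 := by nlinarith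
  rcases abs_choice (k + 1) with h | h <;> rcases abs_choice (k - 1) with h' | h' <;> linarith

lemma aux_bound {X : Type*} [NormedAddCommGroup X] [NormedSpace ℝ X] {L : ℝ} {u c e : X}
    (hL : 0 < L) (hi : LinearIndependent ℝ ![u, c, e]) :
    ∃ M : ℝ, ∀ x ∈ Set.Icc (-1 : ℝ) 1, ∀ s t : ℝ,
      ‖s • (x • c + (1 - x ^ 2) • e) + t • u‖ ≤ L → |s| ≤ M ∧ |t| ≤ M := by
  have hk : LinearMap.ker (Fintype.linearCombination ℝ ![u, c, e]) = ⊥ :=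
    LinearMap.ker_eq_bot.2 (by
      exact hi.fintypeLinearCombination_injective)
  obtain ⟨K, hK, hanti⟩ := LinearMap.exists_antilipschitzWith _ hk
  refine ⟨2 * (K * L), ?_⟩
  rintro x ⟨hx1, hx2⟩ s t h
  have hb := hanti.le_mul_dist ![t, s * x, s * (1 - x ^ 2)] 0
  rw [map_zero, dist_zero_right, dist_zero_right] at hb
  have e1 : Fintype.linearCombination ℝ ![u, c, e] ![t, s * x, s * (1 - x ^ 2)]
      = s • (x • c + (1 - x ^ 2) • e) + t • u := by
    simp [Fintype.linearCombination_apply, Fin.sum_univ_three]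
    module
  rw [e1] at hb
  have hb' : ‖![t, s * x, s * (1 - x ^ 2)]‖ ≤ K * L :=
    hb.trans (mul_le_mul_of_nonneg_left h K.2)
  have n0 : |t| ≤ K * L := (norm_le_pi_norm ![t, s * x, s * (1 - x ^ 2)] 0).trans hb'
  have n1 : |s * x| ≤ K * L := (norm_le_pi_norm ![t, s * x, s * (1 - x ^ 2)] 1).trans hb'
  have n2 : |s * (1 - x ^ 2)| ≤ K * L :=
    (norm_le_pi_norm ![t, s * x, s * (1 - x ^ 2)] 2).trans hb'
  have hKL : 0 ≤ K * L := (abs_nonneg _).trans n0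
  refine ⟨?_, by linarith⟩
  have e2 : s = s * (1 - x ^ 2) + (s * x) * x := by ring
  have hx : |x| ≤ 1 := abs_le.2 ⟨hx1, hx2⟩
  have e3 : |s| ≤ |s * (1 - x ^ 2)| + |s * x| * |x| := by
    rw [← abs_mul (s * x)]
    calc |s| = |s * (1 - x ^ 2) + (s * x) * x| := by rw [← e2]
      _ ≤ _ := abs_add_le _ _
  nlinarith [abs_nonneg (s * x), abs_nonneg x]

theorem equilateral_triple_extends
    (X : Type*) [NormedAddCommGroup X] [NormedSpace ℝ X]
    (hdim : 3 ≤ finrank ℝ X)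
    (lam : ℝ) (hlam : 0 < lam) (a b c : X)
    (hab : ‖a - b‖ = lam) (hbc : ‖b - c‖ = lam) (hac : ‖a - c‖ = lam) :
    ∃ d : X, d ≠ a ∧ d ≠ b ∧ d ≠ c ∧
      ‖d - a‖ = lam ∧ ‖d - b‖ = lam ∧ ‖d - c‖ = lam := by
  set m : X := (1 / 2 : ℝ) • (a + b) with hm
  set u : X := (1 / 2 : ℝ) • (a - b) with hu
  have hum : ‖u‖ = lam / 2 := by
    rw [hu, norm_smul, hab]; norm_num; ring
  have ha : ∀ p : X, p - u = p + m - a := by intro p; rw [hu, hm]; module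
  have hb : ∀ p : X, p + u = p + m - b := by intro p; rw [hu, hm]; module
  have hc1 : ‖(c - m) + u‖ = lam := by
    rw [hb, ← hbc, ← norm_neg]; congr 1; abel
  have hc2 : ‖(c - m) - u‖ = lam := by
    rw [ha, ← hac, ← norm_neg]; congr 1; abel
  have hi := aux_indep hlam hum hc1 hc2
  obtain ⟨e, he⟩ : ∃ e, e ∉ Submodule.span ℝ (Set.range ![u, c - m]) := by
    by_contra! hcon
    have htop : Submodule.span ℝ (Set.range ![u, c - m]) = ⊤ := Submodule.eq_top_iff'.2 hcon
    have := finrank_range_le_card (R := ℝ) ![u, c - m]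
    rw [Set.finrank, htop, finrank_top] at this
    simp at this
    omega
  have hi3 : LinearIndependent ℝ ![u, c - m, e] := by
    have := linearIndependent_finSnoc.2 ⟨hi, he⟩
    have e1 : ![u, c - m, e] = Fin.snoc ![u, c - m] e := by
      funext i; fin_cases i <;> rfl
    rw [e1]
    exact this
  obtain ⟨M, hM⟩ := aux_bound hlam hi3
  obtain ⟨p, h1, h2, h3⟩ := aux_core (fun x : ℝ => x • (c - m) + (1 - x ^ 2) • e)
    (by fun_prop) (by simp) (by simp) hlam hum hc1 hc2 hM
  have k1 : ‖p + m - a‖ = lam := by rw [← ha]; exact h2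
  have k2 : ‖p + m - b‖ = lam := by rw [← hb]; exact h1
  have k3 : ‖p + m - c‖ = lam := by rw [← h3]; congr 1; abel
  refine ⟨p + m, ?_, ?_, ?_, k1, k2, k3⟩
  · intro h; rw [h, sub_self, norm_zero] at k1; exact hlam.ne k1
  · intro h; rw [h, sub_self, norm_zero] at k2; exact hlam.ne k2
  · intro h; rw [h, sub_self, norm_zero] at k3; exact hlam.ne k3
end

section
/- Let 1 < p < 2 be real, let n ≥ 1, and set k = ⌈ log((1 − 2^(p−2))⁻¹) / log 2 ⌉ − 1. Then ℓ_p^n contains an equilateral set of cardinality ⌊ 2^(k+1) · n / (2^(k+1) − 1) ⌋. -/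
def HadP (M : ℕ) : Prop :=
  ∃ (ι κ : Type) (_ : Fintype ι) (_ : Fintype κ) (x : ι → κ → ℝ),
    Fintype.card ι = M ∧ Fintype.card κ + 1 = M ∧ (∀ i k, x i k = 1 ∨ x i k = -1) ∧
    ∀ i j, i ≠ j → ∑ k, x i k * x j k = -1

theorem hadP_pow (m : ℕ) : HadP (2 ^ m) := by
  induction m with
  | zero =>
    refine ⟨Unit, Empty, inferInstance, inferInstance, fun _ k => k.elim, by simp, by simp, ?_, ?_⟩
    · intro i k; exact k.elim
    · intro i j h; exact absurd (Subsingleton.elim i j) h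
  | succ m ih =>
    obtain ⟨ι, κ, _, _, x, h1, h2, h3, h4⟩ := ih
    refine ⟨ι ⊕ ι, Option (κ ⊕ κ), inferInstance, inferInstance,
      fun i k => match i, k with
        | .inl _, none => 1
        | .inr _, none => -1
        | .inl i, some (.inl k) => x i k
        | .inl i, some (.inr k) => x i k
        | .inr i, some (.inl k) => x i k
        | .inr i, some (.inr k) => - x i k, ?_, ?_, ?_, ?_⟩
    · simp [h1, pow_succ]; ring
    · simp [pow_succ]; omega
    · rintro (i | i) (_ | k | k) <;> simp [h3, neg_eq_iff_eq_neg]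
      · exact (h3 i k).symm
    · rintro (i | i) (j | j) hij
      · have := h4 i j (by rintro rfl; exact hij rfl)
        simp [Fintype.sum_option, this]
      · simp [Fintype.sum_option]
      · simp [Fintype.sum_option]
      · have := h4 i j (by rintro rfl; exact hij rfl)
        simp [Fintype.sum_option, this]

def EqP (p : ℝ) (a d : ℕ) : Prop :=
  ∃ (ι κ : Type) (_ : Fintype ι) (_ : Fintype κ) (z : ι → κ → ℝ),
    Fintype.card ι = a ∧ Fintype.card κ = d ∧ (∀ i, ∑ k, |z i k| ^ p = 1) ∧
    ∀ i j, i ≠ j → ∑ k, |z i k - z j k| ^ p = 2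

theorem eqP_zero (p : ℝ) : EqP p 0 0 :=
  ⟨Empty, Empty, inferInstance, inferInstance, fun i => i.elim, by simp, by simp,
    fun i => i.elim, fun i => i.elim⟩

theorem eqP_one (p : ℝ) : EqP p 1 1 :=
  ⟨Unit, Unit, inferInstance, inferInstance, fun _ _ => 1, by simp, by simp,
    by simp, fun i j h => absurd (Subsingleton.elim i j) h⟩

theorem eqP_add {p : ℝ} (hp : 0 < p) {a d a' d' : ℕ} (h : EqP p a d) (h' : EqP p a' d') :
    EqP p (a + a') (d + d') := by
  obtain ⟨ι, κ, _, _, z, h1, h2, h3, h4⟩ := h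
  obtain ⟨ι', κ', _, _, z', h1', h2', h3', h4'⟩ := h'
  refine ⟨ι ⊕ ι', κ ⊕ κ', inferInstance, inferInstance,
    fun i k => match i, k with
      | .inl i, .inl k => z i k
      | .inr i, .inr k => z' i k
      | .inl _, .inr _ => 0
      | .inr _, .inl _ => 0, by simp [h1, h1'], by simp [h2, h2'], ?_, ?_⟩
  · rintro (i | i) <;> simp [h3, h3', Real.zero_rpow hp.ne']
  · rintro (i | i) (j | j) hij
    · have := h4 i j (by rintro rfl; exact hij rfl)
      simp [this, Real.zero_rpow hp.ne']
    · simp [h3, h3']; norm_num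
    · simp [h3, h3']; norm_num
    · have := h4' i j (by rintro rfl; exact hij rfl)
      simp [this, Real.zero_rpow hp.ne']

theorem eqP_mul {p : ℝ} (hp : 0 < p) {a d : ℕ} (h : EqP p a d) (q : ℕ) :
    EqP p (q * a) (q * d) := by
  induction q with
  | zero => simpa using eqP_zero p
  | succ q ih => simpa [Nat.succ_mul] using eqP_add hp ih h

theorem eqP_scale {p : ℝ} (hp : 0 < p) {ι κ : Type} [Fintype ι] [Fintype κ] (z : ι → κ → ℝ)
    (ρ : ℝ) (hρ : 0 < ρ) (h3 : ∀ i, ∑ k, |z i k| ^ p = ρ)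
    (h4 : ∀ i j, i ≠ j → ∑ k, |z i k - z j k| ^ p = 2 * ρ) :
    EqP p (Fintype.card ι) (Fintype.card κ) := by
  have key : ∀ t : ℝ, |ρ ^ (-p⁻¹) * t| ^ p = ρ⁻¹ * |t| ^ p := by
    intro t
    have h0 : 0 < ρ ^ (-p⁻¹) := Real.rpow_pos_of_pos hρ _
    rw [abs_mul, abs_of_pos h0, Real.mul_rpow h0.le (abs_nonneg _), ← Real.rpow_mul hρ.le]
    rw [neg_mul, inv_mul_cancel₀ hp.ne', Real.rpow_neg_one]
  refine ⟨ι, κ, inferInstance, inferInstance, fun i k => ρ ^ (-p⁻¹) * z i k, rfl, rfl, ?_, ?_⟩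
  · intro i
    simp only [key, ← Finset.mul_sum, h3]
    field_simp
  · intro i j hij
    simp only [← mul_sub, key, ← Finset.mul_sum, h4 i j hij]
    field_simp

theorem eqP_block {p : ℝ} (hp1 : 1 < p) (m : ℕ)
    (hlo : 1 - 1 / (2:ℝ) ^ m ≤ 2 ^ (p - 2)) (hhi : (2:ℝ) ^ (p - 2) ≤ 1 - 1 / 2 ^ (m + 1)) :
    EqP p (2 ^ (m + 1)) (2 ^ (m + 1) - 1) := by
  have hp : 0 < p := by linarith
  obtain ⟨ι, κ, _, _, x, h1, h2, h3, h4⟩ := hadP_pow m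
  set M : ℝ := 2 ^ m with hM
  have hMpos : 0 < M := by positivity
  have hcard : (Fintype.card κ : ℝ) = M - 1 := by
    have : ((Fintype.card κ + 1 : ℕ) : ℝ) = ((2 ^ m : ℕ) : ℝ) := by rw [h2]
    push_cast at this
    linarith
  set A : ℝ := 2 ^ (p - 2) with hA
  have h2p : (2:ℝ) ^ p = 4 * A := by
    rw [hA, Real.rpow_sub (by norm_num)]; norm_num; ring
  set w : ℝ := A * M - (M - 1) with hw
  have hw0 : 0 ≤ w := by
    have := mul_le_mul_of_nonneg_right hlo hMpos.le
    have e : (1 - 1 / M) * M = M - 1 := by field_simp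
    linarith
  have hw1 : w ≤ 1 / 2 := by
    have := mul_le_mul_of_nonneg_right hhi hMpos.le
    have e : (1 - 1 / 2 ^ (m + 1)) * M = M - 1 / 2 := by
      rw [pow_succ, ← hM]; field_simp
    linarith
  have hA1 : 1 / 2 ≤ A := by
    rw [hA]
    calc (1/2 : ℝ) = 2 ^ (-1 : ℝ) := by rw [Real.rpow_neg_one]; norm_num
      _ ≤ _ := Real.rpow_le_rpow_of_exponent_le (by norm_num) (by linarith)
  let f : ℝ → ℝ := fun b => (1 + |b| ^ p) * (2 * A * M) - (M - 1) * (|1 - b| ^ p + |1 + b| ^ p)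
      - 4 * A * ((1 + |b| ^ p) * w)
  have hf : ContinuousOn f (Set.Icc 0 1) := by
    have hc : ∀ g : ℝ → ℝ, Continuous g → Continuous fun b => |g b| ^ p := fun g hg =>
      hg.abs.rpow_const (fun _ => Or.inr hp.le)
    have a1 := hc (fun b => b) continuous_id
    have a2 := hc (fun b => 1 - b) (by fun_prop)
    have a3 := hc (fun b => 1 + b) (by fun_prop)
    apply Continuous.continuousOn
    simp only [f]
    fun_prop
  have f0 : f 0 ≤ 0 := by
    simp only [f, abs_zero, Real.zero_rpow hp.ne', sub_zero, add_zero, abs_one, Real.one_rpow]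
    nlinarith
  have f1 : 0 ≤ f 1 := by
    simp only [f, abs_one, Real.one_rpow, sub_self, abs_zero, Real.zero_rpow hp.ne']
    norm_num [h2p]
    nlinarith
  obtain ⟨b, hb, hfb⟩ := intermediate_value_Icc (zero_le_one' ℝ) hf ⟨f0, f1⟩
  simp only [f] at hfb
  set B : ℝ := |b| ^ p with hB
  have hB0 : 0 ≤ B := by positivity
  set c : ℝ := ((1 + B) * w) ^ p⁻¹ with hc
  have hc0 : 0 ≤ c := by positivity
  have hcp : |c| ^ p = (1 + B) * w := by
    rw [abs_of_nonneg hc0, hc, ← Real.rpow_mul (by positivity), inv_mul_cancel₀ hp.ne',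
      Real.rpow_one]
  have h2c : |2 * c| ^ p = 4 * A * ((1 + B) * w) := by
    rw [abs_mul, Real.mul_rpow (abs_nonneg _) (abs_nonneg _), hcp, abs_two, h2p]
  have habs : ∀ i k, |x i k| = 1 := by
    intro i k; rcases h3 i k with h | h <;> simp [h]
  have hx1 : ∀ (t : ℝ) i k, |t * x i k| ^ p = |t| ^ p := by
    intro t i k; rw [abs_mul, habs, mul_one]
  have hdiff : ∀ i j, i ≠ j → ∑ k, |x i k - x j k| ^ p = 2 * A * M := by
    intro i j hij
    have : ∀ k, |x i k - x j k| ^ p = 2 * A * (1 - x i k * x j k) := by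
      intro k
      rcases h3 i k with h | h <;> rcases h3 j k with h' | h' <;>
        norm_num [h, h', Real.zero_rpow hp.ne', h2p] <;> ring
    simp only [this, ← Finset.mul_sum, Finset.sum_sub_distrib, h4 i j hij]
    simp [hcard]
  have hdiff' : ∀ (t : ℝ) i j, i ≠ j → ∑ k, |t * x i k - t * x j k| ^ p
      = |t| ^ p * (2 * A * M) := by
    intro t i j hij
    simp only [← mul_sub, abs_mul, Real.mul_rpow (abs_nonneg _) (abs_nonneg _), ← Finset.mul_sum,
      hdiff i j hij]
  have hcross : ∀ i j, ∑ k, |x i k - b * x j k| ^ p + ∑ k, |b * x i k + x j k| ^ p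
      = (M - 1) * (|1 - b| ^ p + |1 + b| ^ p) := by
    intro i j
    rw [← Finset.sum_add_distrib]
    have : ∀ k, |x i k - b * x j k| ^ p + |b * x i k + x j k| ^ p
        = |1 - b| ^ p + |1 + b| ^ p := by
      intro k
      have e1 : |-1 - b| = |1 + b| := by rw [← abs_neg]; ring_nf
      have e2 : |-1 + b| = |1 - b| := by rw [← abs_neg]; ring_nf
      have e3 : |b - 1| = |1 - b| := abs_sub_comm _ _
      have e4 : |b + 1| = |1 + b| := by rw [add_comm]
      have e5 : |-b + 1| = |1 - b| := by ring_nf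
      have e6 : |-b + -1| = |1 + b| := by rw [← abs_neg]; ring_nf
      have e7 : |b + -1| = |1 - b| := by rw [← abs_neg]; ring_nf
      rcases h3 i k with h | h <;> rcases h3 j k with h' | h' <;>
        simp only [h, h', mul_one, mul_neg, sub_neg_eq_add, e1, e2, e3, e4, e5, e6, e7] <;> ring
    simp only [this]
    simp [hcard]
    ring
  have main := eqP_scale (ι := ι ⊕ ι) (κ := Option (κ ⊕ κ)) hp
    (fun i k => match i, k with
        | .inl _, none => c
        | .inr _, none => -c
        | .inl i, some (.inl k) => x i k
        | .inl i, some (.inr k) => b * x i k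
        | .inr i, some (.inl k) => b * x i k
        | .inr i, some (.inr k) => - x i k) ((1 + B) * (A * M)) (by positivity) ?_ ?_
  · have e1 : Fintype.card (ι ⊕ ι) = 2 ^ (m + 1) := by simp [h1, pow_succ]; ring
    have e2 : Fintype.card (Option (κ ⊕ κ)) = 2 ^ (m + 1) - 1 := by simp [pow_succ]; omega
    rwa [e1, e2] at main
  · rintro (i | i) <;>
      simp [Fintype.sum_option, hcp, hx1, habs, hcard, ← hB] <;> rw [hw] <;> ring
  · rintro (i | i) (j | j) hij
    · have hij' : i ≠ j := by rintro rfl; exact hij rfl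
      simp [Fintype.sum_option, hdiff i j hij', hdiff' b i j hij', Real.zero_rpow hp.ne', ← hB]
      ring
    · have e : |c + c| = |2 * c| := by rw [two_mul]
      simp only [Fintype.sum_option, Fintype.sum_sum_type, sub_neg_eq_add]
      rw [e, h2c, hcross]
      linarith
    · have e : |-c - c| = |2 * c| := by rw [← abs_neg]; ring_nf
      have e1 : ∀ k, |b * x i k - x j k| = |x j k - b * x i k| := fun k => abs_sub_comm _ _
      have e2 : ∀ k, |-x i k - b * x j k| = |b * x j k + x i k| := fun k => by
        rw [← abs_neg]; ring_nf
      simp only [Fintype.sum_option, Fintype.sum_sum_type, e, e1, e2]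
      rw [h2c, hcross]
      linarith
    · have hij' : i ≠ j := by rintro rfl; exact hij rfl
      have e2 : ∀ k, |-x i k - -x j k| = |x i k - x j k| := fun k => by
        rw [← abs_neg]; ring_nf
      simp only [Fintype.sum_option, Fintype.sum_sum_type, e2, hdiff i j hij', hdiff' b i j hij',
        ← hB, sub_self, abs_zero, Real.zero_rpow hp.ne']
      ring

theorem eqP_finset {p : ℝ} (hp : 0 < p) {a n : ℕ} (h : EqP p a n) :
    ∃ S : Finset (PiLp (ENNReal.ofReal p) (fun _ : Fin n => ℝ)), S.card = a ∧
      ∃ lam : ℝ, 0 < lam ∧ ∀ x ∈ S, ∀ y ∈ S, x ≠ y → ‖x - y‖ = lam := by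
  classical
  obtain ⟨ι, κ, _, _, z, h1, h2, h3, h4⟩ := h
  let e : Fin n ≃ κ := (Fintype.equivFinOfCardEq h2).symm
  let g : ι → PiLp (ENNReal.ofReal p) (fun _ : Fin n => ℝ) := fun i =>
    WithLp.toLp _ (fun k => z i (e k))
  have hg : Function.Injective g := by
    intro i j hij
    by_contra hne
    have h := h4 i j hne
    have : ∀ k, z i k = z j k := by
      intro k
      have := congrArg (fun v : PiLp (ENNReal.ofReal p) (fun _ : Fin n => ℝ) => v (e.symm k)) hij
      simpa [g] using this
    simp [this, Real.zero_rpow hp.ne'] at h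
  refine ⟨Finset.univ.image g, ?_, 2 ^ (1 / p), by positivity, ?_⟩
  · rw [Finset.card_image_of_injective _ hg, Finset.card_univ, h1]
  · intro x hx y hy hxy
    obtain ⟨i, -, rfl⟩ := Finset.mem_image.1 hx
    obtain ⟨j, -, rfl⟩ := Finset.mem_image.1 hy
    have hij : i ≠ j := fun h => hxy (by rw [h])
    have hpr : (ENNReal.ofReal p).toReal = p := ENNReal.toReal_ofReal hp.le
    rw [PiLp.norm_eq_sum (by rw [hpr]; exact hp), hpr, ← h4 i j hij]
    congr 1
    simp only [g, PiLp.sub_apply, Real.norm_eq_abs]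
    exact Equiv.sum_comp e (fun k => |z i k - z j k| ^ p)

theorem lp_lower_bound_equilateral
    (p : ℝ) (hp1 : 1 < p) (hp2 : p < 2) (n : ℕ) (hn : 1 ≤ n) :
    ∃ S : Finset (PiLp (ENNReal.ofReal p) (fun _ : Fin n => ℝ)),
      (S.card : ℤ) =
        ⌊(2 : ℝ) ^ (⌈Real.log (1 - 2 ^ (p - 2))⁻¹ / Real.log 2⌉ - 1 + 1) * n /
          ((2 : ℝ) ^ (⌈Real.log (1 - 2 ^ (p - 2))⁻¹ / Real.log 2⌉ - 1 + 1) - 1)⌋ ∧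
      ∃ lam : ℝ, 0 < lam ∧ ∀ x ∈ S, ∀ y ∈ S, x ≠ y → ‖x - y‖ = lam := by
  have hp : 0 < p := by linarith
  have hA1 : (2:ℝ) ^ (p - 2) < 1 := Real.rpow_lt_one_of_one_lt_of_neg (by norm_num) (by linarith)
  have hA2 : 1 / 2 < (2:ℝ) ^ (p - 2) := by
    calc (1/2 : ℝ) = 2 ^ (-1 : ℝ) := by rw [Real.rpow_neg_one]; norm_num
      _ < _ := Real.rpow_lt_rpow_of_exponent_lt (by norm_num) (by linarith)
  set A : ℝ := 2 ^ (p - 2) with hA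
  have hl2 : 0 < Real.log 2 := Real.log_pos (by norm_num)
  set L := Real.log (1 - A)⁻¹ / Real.log 2 with hL
  have hLeq : Real.log (1 - A)⁻¹ = L * Real.log 2 := by rw [hL]; field_simp
  have hinv : (1 - A)⁻¹ = (2:ℝ) ^ L := by
    rw [Real.rpow_def_of_pos (by norm_num), mul_comm, ← hLeq, Real.exp_log]
    exact inv_pos.2 (by linarith)
  have hL1 : 1 < L := by
    rw [← Real.rpow_lt_rpow_left_iff (x := 2) (by norm_num), ← hinv, Real.rpow_one]
    rw [lt_inv_comm₀ (by norm_num) (by linarith)]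
    linarith
  have hK : 1 < ⌈L⌉ := by
    rw [Int.lt_ceil]; exact_mod_cast hL1
  obtain ⟨m, hm⟩ : ∃ m : ℕ, ⌈L⌉ = (m : ℤ) + 1 := ⟨(⌈L⌉ - 1).toNat, by omega⟩
  have hm1 : 1 ≤ m := by omega
  have hmL : (m : ℝ) < L := by
    have : (m : ℤ) < ⌈L⌉ := by omega
    rw [Int.lt_ceil] at this; exact_mod_cast this
  have hLm : L ≤ ((m + 1 : ℕ) : ℝ) := by
    have := Int.le_ceil L
    rw [hm] at this; push_cast at this ⊢; exact this
  have hlo : 1 - 1 / (2:ℝ) ^ m ≤ A := by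
    have : (2:ℝ) ^ m ≤ (1 - A)⁻¹ := by
      rw [hinv, ← Real.rpow_natCast]
      exact Real.rpow_le_rpow_of_exponent_le (by norm_num) hmL.le
    have := (le_inv_comm₀ (by positivity) (by linarith)).1 this
    rw [one_div]; linarith
  have hhi : A ≤ 1 - 1 / (2:ℝ) ^ (m + 1) := by
    have : (1 - A)⁻¹ ≤ (2:ℝ) ^ (m + 1) := by
      rw [hinv, ← Real.rpow_natCast]
      exact Real.rpow_le_rpow_of_exponent_le (by norm_num) hLm
    have := (inv_le_comm₀ (by linarith) (by positivity)).1 this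
    rw [one_div]; linarith
  have hblock := eqP_block hp1 m hlo hhi
  have hN : 2 ≤ 2 ^ (m + 1) := by
    calc 2 = 2 ^ 1 := rfl
      _ ≤ 2 ^ (m + 1) := Nat.pow_le_pow_right (by norm_num) (by omega)
  have hexp : (2:ℝ) ^ (⌈L⌉ - 1 + 1) = ((2 ^ (m + 1) : ℕ) : ℝ) := by
    rw [hm]
    have : ((m:ℤ) + 1 - 1 + 1) = ((m + 1 : ℕ) : ℤ) := by push_cast; ring
    rw [this, zpow_natCast]; push_cast; rfl
  rw [hexp]
  generalize 2 ^ (m + 1) = N at *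
  obtain ⟨D, rfl⟩ : ∃ D, N = D + 1 := ⟨N - 1, by omega⟩
  simp only [Nat.add_sub_cancel] at hblock
  have hD : 0 < D := by omega
  have hone := eqP_mul hp (eqP_one p) (n % D)
  have htot := eqP_add hp (eqP_mul hp hblock (n / D)) hone
  have hnD : n / D * D + n % D * 1 = n := by rw [mul_one]; exact Nat.div_add_mod' n D
  rw [hnD] at htot
  obtain ⟨S, hS, hrest⟩ := eqP_finset hp htot
  refine ⟨S, ?_, hrest⟩
  rw [hS]
  symm
  rw [Int.floor_eq_iff]
  have hr : n % D < D := Nat.mod_lt _ hD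
  have hDR : (0:ℝ) < D := by exact_mod_cast hD
  have hrR : ((n % D : ℕ) : ℝ) < D := by exact_mod_cast hr
  have hr0 : (0:ℝ) ≤ ((n % D : ℕ) : ℝ) := Nat.cast_nonneg _
  have hnR : ((n / D : ℕ) : ℝ) * D + ((n % D : ℕ) : ℝ) = n := by
    have := congrArg (Nat.cast (R := ℝ)) hnD
    push_cast at this
    simpa using this
  rw [Int.cast_natCast, Nat.cast_add, Nat.cast_mul, Nat.cast_mul, Nat.cast_add, Nat.cast_one]
  have e : ((D:ℝ) + 1 - 1) = D := by ring
  rw [e, le_div_iff₀ hDR, div_lt_iff₀ hDR, ← hnR]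
  generalize ((n % D : ℕ) : ℝ) = r at *
  constructor <;> nlinarith
end

section
/- Let p_0, p_1, …, p_n be points of Euclidean space ℝ^n. If the points p_0, …, p_n are affinely independent, then the Cayley–Menger determinant CM(p_0, …, p_n) has sign (−1)^(n+1), i.e. (−1)^(n+1) · CM(p_0, …, p_n) > 0. Moreover, if the points are affinely dependent, then CM(p_0, …, p_n) = 0. -/
/-- The Cayley–Menger matrix of points `p 0, …, p m` in a Euclidean space:
entries are squared distances, bordered by a row and column of ones with a
zero in the corner. -/
noncomputable def cayleyMengerMatrix {m n : ℕ}
    (p : Fin (m + 1) → EuclideanSpace ℝ (Fin n)) :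
    Matrix (Option (Fin (m + 1))) (Option (Fin (m + 1))) ℝ :=
  fun i j =>
    match i, j with
    | some i, some j => ‖p i - p j‖ ^ 2
    | some _, none => 1
    | none, some _ => 1
    | none, none => 0

noncomputable def cmA {n : ℕ} (p : Fin (n + 1) → EuclideanSpace ℝ (Fin n)) :
    Matrix (Option (Fin (n + 1))) (Option (Fin (n + 1))) ℝ :=
  fun i k =>
    match i, k with
    | some i, some k => (Fin.cons 1 (fun l => p i l) : Fin (n + 1) → ℝ) k
    | some i, none => ‖p i‖ ^ 2
    | none, some _ => 0
    | none, none => 1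

noncomputable def cmD (n : ℕ) : Option (Fin (n + 1)) → ℝ
  | none => 1
  | some k => (Fin.cons 1 (fun _ => -2) : Fin (n + 1) → ℝ) k

theorem cm_factor {n : ℕ} (p : Fin (n + 1) → EuclideanSpace ℝ (Fin n)) :
    cayleyMengerMatrix p = cmA p * Matrix.diagonal (cmD n) *
      ((cmA p).submatrix id (Equiv.swap none (some 0))).transpose := by
  have hs : ∀ l : Fin n, Equiv.swap (none : Option (Fin (n + 1))) (some 0) (some l.succ)
      = some l.succ := fun l => Equiv.swap_apply_of_ne_of_ne (by simp) (by simp)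
  ext i j
  rw [Matrix.mul_apply]
  simp only [Matrix.mul_diagonal, Matrix.transpose_apply, Matrix.submatrix_apply, id,
    Fintype.sum_option, Fin.sum_univ_succ, Equiv.swap_apply_left, Equiv.swap_apply_right, hs]
  rcases i with _ | i <;> rcases j with _ | j <;>
    simp [cayleyMengerMatrix, cmA, cmD]
  rw [EuclideanSpace.norm_sq_eq, EuclideanSpace.norm_sq_eq, EuclideanSpace.norm_sq_eq]
  simp only [Real.norm_eq_abs, sq_abs, PiLp.sub_apply]
  rw [← sub_eq_zero, ← Finset.sum_neg_distrib, ← Finset.sum_add_distrib,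
    ← Finset.sum_add_distrib, ← Finset.sum_sub_distrib]
  apply Finset.sum_eq_zero
  intros
  ring

theorem cm_det {n : ℕ} (p : Fin (n + 1) → EuclideanSpace ℝ (Fin n)) :
    (cayleyMengerMatrix p).det = (-1) ^ (n + 1) * (2 ^ n * (cmA p).det ^ 2) := by
  have h2 : (-2 : ℝ) ^ n = (-1) ^ n * 2 ^ n := by rw [← mul_pow]; norm_num
  rw [cm_factor, Matrix.det_mul, Matrix.det_mul, Matrix.det_transpose, Matrix.det_permute',
    Matrix.det_diagonal, Equiv.Perm.sign_swap (by simp), Fintype.prod_option,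
    Fin.prod_univ_succ]
  simp [cmD, h2]
  ring

theorem cm_vecMul {n : ℕ} (p : Fin (n + 1) → EuclideanSpace ℝ (Fin n))
    (w : Option (Fin (n + 1)) → ℝ) :
    Matrix.vecMul w (cmA p) = 0 ↔ (∑ i, w (some i) = 0 ∧ ∑ i, w (some i) • p i = 0) ∧
      w none + ∑ i, w (some i) * ‖p i‖ ^ 2 = 0 := by
  rw [funext_iff, Option.forall, Fin.forall_fin_succ, and_comm, PiLp.ext_iff]
  simp [Matrix.vecMul, dotProduct, Fintype.sum_option, cmA]

theorem cm_indep {n : ℕ} (p : Fin (n + 1) → EuclideanSpace ℝ (Fin n)) :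
    AffineIndependent ℝ p ↔ (cmA p).det ≠ 0 := by
  rw [affineIndependent_iff_of_fintype, ← not_iff_not, not_not,
    ← Matrix.exists_vecMul_eq_zero_iff]
  push Not
  constructor
  · rintro ⟨w, h0, h1, i, hi⟩
    rw [Finset.weightedVSub_eq_linear_combination _ h0] at h1
    refine ⟨fun o => o.elim (-∑ i, w i * ‖p i‖ ^ 2) w, fun h => hi (congrFun h (some i)), ?_⟩
    rw [cm_vecMul]
    exact ⟨⟨h0, h1⟩, by simp⟩
  · rintro ⟨w, hw, h⟩
    rw [cm_vecMul] at h
    refine ⟨fun i => w (some i), h.1.1, ?_, ?_⟩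
    · rw [Finset.weightedVSub_eq_linear_combination _ h.1.1]
      exact h.1.2
    · by_contra! hc
      apply hw
      have h3 := h.2
      simp only [hc, zero_mul, Finset.sum_const_zero, add_zero] at h3
      ext o
      rcases o with _ | i
      · exact h3
      · exact hc i

theorem cayleyMenger_sign
    (n : ℕ) (p : Fin (n + 1) → EuclideanSpace ℝ (Fin n)) :
    (AffineIndependent ℝ p →
      0 < (-1 : ℝ) ^ (n + 1) * (cayleyMengerMatrix p).det) ∧
    (¬ AffineIndependent ℝ p → (cayleyMengerMatrix p).det = 0) := by
  rw [cm_indep, cm_det]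
  constructor
  · intro h
    rw [← mul_assoc, ← mul_pow]
    norm_num
    positivity
  · intro h
    rw [not_not] at h
    simp [h]
end

section
/- Let n ≥ 1 and let ρ : Fin (n+1) → Fin (n+1) → ℝ be the distance function of a metric space on n+1 points p_0, …, p_n, i.e. ρ is symmetric, ρ(i,i) = 0, ρ(i,j) > 0 for i ≠ j, and ρ satisfies the triangle inequality ρ(i,k) ≤ ρ(i,j) + ρ(j,k). Suppose that for each k = 1, …, n the Cayley–Menger determinant of p_0, …, p_k (the determinant of the (k+2) × (k+2) matrix formed from the distances ρ(i,j) for 0 ≤ i, j ≤ k) has sign (−1)^(k+1). Then there exist points q_0, …, q_n in Euclidean space ℝ^n with ‖q_i − q_j‖ = ρ(i,j) for all i, j, and the points q_0, …, q_n are affinely independent. -/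
/-- The Cayley–Menger matrix of an abstract distance function `ρ` on `m + 1`
points: entries are squared distances, bordered by a row and column of ones
with a zero in the corner. -/
def cayleyMengerMatrixOfDist {m : ℕ} (ρ : Fin (m + 1) → Fin (m + 1) → ℝ) :
    Matrix (Option (Fin (m + 1))) (Option (Fin (m + 1))) ℝ :=
  fun i j =>
    match i, j with
    | some i, some j => ρ i j ^ 2
    | some _, none => 1
    | none, some _ => 1
    | none, none => 0

lemma mm_sylv (n : ℕ) (A : Matrix (Fin n) (Fin n) ℝ) (hA : A.IsHermitian)
    (h : ∀ (k : ℕ) (hk : k ≤ n), 0 < (A.submatrix (Fin.castLE hk) (Fin.castLE hk)).det) :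
    A.PosDef := by
  induction n with
  | zero =>
    refine Matrix.PosDef.of_dotProduct_mulVec_pos hA ?_
    intro x hx
    exact absurd (Subsingleton.elim x 0) hx
  | succ n ih =>
    set A₁ := A.submatrix (Fin.castSucc) (Fin.castSucc) with hA₁
    have h1 : A₁.PosDef := by
      refine ih A₁ (hA.submatrix _) ?_
      intro k hk
      exact h k (hk.trans (Nat.le_succ n))
    have hdet : 0 < A.det := by simpa using h (n+1) le_rfl
    set B : Matrix (Fin n) (Fin 1) ℝ := fun i _ => A i.castSucc (Fin.last n) with hB
    set D : Matrix (Fin 1) (Fin 1) ℝ := fun _ _ => A (Fin.last n) (Fin.last n) with hD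
    have hAB : A.submatrix (finSumFinEquiv (m := n) (n := 1)) (finSumFinEquiv (m := n) (n := 1))
        = Matrix.fromBlocks A₁ B B.conjTranspose D := by
      have hl : ∀ j : Fin 1, Fin.natAdd n j = Fin.last n := by
        intro j; ext; simp
      ext i j
      rcases i with i | i <;> rcases j with j | j
      · rfl
      · change A _ _ = A _ _
        rw [finSumFinEquiv_apply_right, hl]; rfl
      · have := hA.apply (Fin.last n) j.castSucc
        simp only [star_trivial] at this
        change A _ _ = star (A _ _)
        rw [finSumFinEquiv_apply_right, hl, star_trivial, this]; rfl
      · change A _ _ = A _ _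
        rw [finSumFinEquiv_apply_right, finSumFinEquiv_apply_right, hl, hl]
    have hdet2 : (Matrix.fromBlocks A₁ B B.conjTranspose D).det = A.det := by
      rw [← hAB, Matrix.det_submatrix_equiv_self]
    have : Invertible A₁ := h1.isUnit.invertible
    rw [Matrix.det_fromBlocks₁₁] at hdet2
    have hS : 0 < (D - B.conjTranspose * ⅟A₁ * B).det := by
      have := h1.det_pos
      rw [← hdet2] at hdet
      exact (pos_iff_pos_of_mul_pos hdet).1 this
    have hps : A.PosSemidef := by
      rw [← Matrix.posSemidef_submatrix_equiv (finSumFinEquiv (m := n) (n := 1)), hAB,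
        Matrix.PosDef.fromBlocks₁₁ _ _ h1]
      rw [Matrix.invOf_eq_nonsing_inv] at hS
      set S := D - B.conjTranspose * A₁⁻¹ * B with hSd
      have : S = Matrix.diagonal (fun _ => S.det) := by
        ext i j
        fin_cases i; fin_cases j
        simp
      rw [this]
      exact Matrix.PosSemidef.diagonal (fun _ => hS.le)
    rw [hps.posDef_iff_isUnit, Matrix.isUnit_iff_isUnit_det]
    exact hdet.ne'.isUnit

open scoped MatrixOrder in
lemma mm_fact {n : ℕ} (A : Matrix (Fin n) (Fin n) ℝ) (hA : A.PosSemidef) :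
    ∃ C : Matrix (Fin n) (Fin n) ℝ, A = C.conjTranspose * C := by
  exact CStarAlgebra.nonneg_iff_eq_star_mul_self.mp hA.nonneg

noncomputable def mmGram {k : ℕ} (ρ : Fin (k + 1) → Fin (k + 1) → ℝ) : Matrix (Fin k) (Fin k) ℝ :=
  fun i j => (ρ 0 i.succ ^ 2 + ρ 0 j.succ ^ 2 - ρ i.succ j.succ ^ 2) / 2

def mmFun (k : ℕ) : Fin 2 ⊕ Fin k → Option (Fin (k + 1))
  | .inl 0 => none
  | .inl 1 => some 0
  | .inr j => some j.succ

lemma mmFun_bij (k : ℕ) : Function.Bijective (mmFun k) := by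
  constructor
  · rintro (a | a) (b | b) h
    · fin_cases a <;> fin_cases b <;> simp_all [mmFun]
    · fin_cases a <;> simp [mmFun] at h
      exact absurd h.symm (Fin.succ_ne_zero _)
    · fin_cases b <;> simp [mmFun] at h
    · simpa [mmFun] using h
  · rintro (_ | a)
    · exact ⟨.inl 0, rfl⟩
    · refine Fin.cases ⟨.inl 1, rfl⟩ (fun j => ⟨.inr j, rfl⟩) a

lemma mm_det {k : ℕ} (ρ : Fin (k + 1) → Fin (k + 1) → ℝ)
    (hsymm : ∀ i j, ρ i j = ρ j i) (hdiag : ∀ i, ρ i i = 0) :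
    (cayleyMengerMatrixOfDist ρ).det = (-1) ^ (k + 1) * 2 ^ k * (mmGram ρ).det := by
  have h := Matrix.det_submatrix_equiv_self (Equiv.ofBijective _ (mmFun_bij k))
    (cayleyMengerMatrixOfDist ρ)
  set P : Matrix (Fin 2) (Fin 2) ℝ := !![0, 1; 1, 0] with hP
  have hPP : P * P = 1 := by
    ext i j
    fin_cases i <;> fin_cases j <;> simp [hP]
  let : Invertible P := ⟨P, hPP, hPP⟩
  have hi : ⅟P = P := rfl
  set B : Matrix (Fin 2) (Fin k) ℝ := Matrix.of fun a j => ![1, ρ 0 j.succ ^ 2] a with hB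
  have e : (cayleyMengerMatrixOfDist ρ).submatrix (Equiv.ofBijective _ (mmFun_bij k))
      (Equiv.ofBijective _ (mmFun_bij k)) =
      Matrix.fromBlocks P B B.transpose (Matrix.of fun i j => ρ i.succ j.succ ^ 2) := by
    ext i j
    rcases i with i | i <;> rcases j with j | j
    · fin_cases i <;> fin_cases j <;> simp [mmFun, cayleyMengerMatrixOfDist, hP, hdiag]
    · fin_cases i <;> simp [mmFun, cayleyMengerMatrixOfDist, hB]
    · fin_cases j <;> simp [mmFun, cayleyMengerMatrixOfDist, hB, hsymm i.succ 0]
    · simp [mmFun, cayleyMengerMatrixOfDist]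
  rw [← h, e, Matrix.det_fromBlocks₁₁, hi]
  have e2 : (Matrix.of fun i j : Fin k => ρ i.succ j.succ ^ 2) - B.transpose * P * B
      = (-2 : ℝ) • mmGram ρ := by
    ext i j
    simp [Matrix.mul_apply, hP, hB, mmGram, Fin.sum_univ_two]
    ring
  rw [e2, Matrix.det_smul]
  have : P.det = -1 := by simp [hP, Matrix.det_fin_two]
  rw [this, Fintype.card_fin, pow_succ, show (-2 : ℝ) = -1 * 2 by norm_num, mul_pow]
  ring

theorem menger_embedding
    (n : ℕ) (hn : 1 ≤ n) (ρ : Fin (n + 1) → Fin (n + 1) → ℝ)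
    (hsymm : ∀ i j, ρ i j = ρ j i)
    (hdiag : ∀ i, ρ i i = 0)
    (hpos : ∀ i j, i ≠ j → 0 < ρ i j)
    (htri : ∀ i j k, ρ i k ≤ ρ i j + ρ j k)
    (hCM : ∀ (k : ℕ) (hk : 1 ≤ k) (hk' : k ≤ n),
      0 < (-1 : ℝ) ^ (k + 1) *
        (cayleyMengerMatrixOfDist (fun i j : Fin (k + 1) =>
          ρ (Fin.castLE (Nat.succ_le_succ hk') i)
            (Fin.castLE (Nat.succ_le_succ hk') j))).det) :
    ∃ q : Fin (n + 1) → EuclideanSpace ℝ (Fin n),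
      (∀ i j, ‖q i - q j‖ = ρ i j) ∧ AffineIndependent ℝ q := by
  have hG : (mmGram ρ).PosDef := by
    apply mm_sylv
    · ext i j
      simp [mmGram, hsymm i.succ j.succ]
      ring
    · intro k hk
      rcases Nat.eq_zero_or_pos k with rfl | hk0
      · simp
      · have h := hCM k hk0 hk
        rw [mm_det _ (fun i j => hsymm _ _) (fun i => hdiag _)] at h
        rw [← mul_assoc, ← mul_assoc, ← pow_add, Even.neg_one_pow ⟨_, rfl⟩, one_mul] at h
        exact pos_of_mul_pos_right h (by positivity)
  obtain ⟨C, hC⟩ := mm_fact _ hG.posSemidef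
  have hunit : IsUnit C := by
    have h1 := hG.det_pos
    rw [hC, Matrix.det_mul] at h1
    rw [Matrix.isUnit_iff_isUnit_det]
    exact (right_ne_zero_of_mul h1.ne').isUnit
  have hcol : LinearIndependent ℝ C.col := Matrix.linearIndependent_cols_iff_isUnit.2 hunit
  let v : Fin n → EuclideanSpace ℝ (Fin n) := fun i => WithLp.toLp 2 (C.col i)
  have hv : LinearIndependent ℝ v :=
    hcol.map' (WithLp.linearEquiv 2 ℝ (Fin n → ℝ)).symm.toLinearMap (LinearEquiv.ker _)
  have hin : ∀ i j, inner ℝ (v i) (v j) = mmGram ρ i j := by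
    intro i j
    rw [hC]
    simp [v, PiLp.inner_apply, Matrix.mul_apply, mul_comm]
  have hnn : ∀ i j, 0 ≤ ρ i j := by
    intro i j
    by_cases h : i = j
    · rw [h, hdiag]
    · exact (hpos i j h).le
  have hself : ∀ i, ‖v i‖ ^ 2 = ρ 0 i.succ ^ 2 := by
    intro i
    rw [← real_inner_self_eq_norm_sq, hin]
    simp [mmGram, hdiag]
  refine ⟨Fin.cons 0 v, ?_, ?_⟩
  · intro i j
    rw [← sq_eq_sq₀ (norm_nonneg _) (hnn i j)]
    refine Fin.cases ?_ (fun i => ?_) i <;> refine Fin.cases ?_ (fun j => ?_) j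
    · simp [hdiag]
    · simp [hself]
    · simp [hself, hsymm i.succ 0]
    · simp only [Fin.cons_succ]
      rw [norm_sub_sq_real, hself, hself, hin, mmGram]
      ring
  · rw [affineIndependent_iff_linearIndependent_vsub ℝ _ (0 : Fin (n + 1))]
    rw [← linearIndependent_equiv (finSuccAboveEquiv (0 : Fin (n + 1)))]
    have e : ((fun i : { x : Fin (n + 1) // x ≠ 0 } =>
        (Fin.cons 0 v : Fin (n + 1) → EuclideanSpace ℝ (Fin n)) i -ᵥ
          (Fin.cons 0 v : Fin (n + 1) → EuclideanSpace ℝ (Fin n)) 0) ∘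
        (finSuccAboveEquiv (0 : Fin (n + 1)))) = v := by
      funext i
      simp [finSuccAboveEquiv_apply]
    rw [e]
    exact hv
end

section
/- Let n ≥ 1 and let ρ : Fin (n+1) → Fin (n+1) → ℝ be symmetric with ρ(i,i) = 0 and with 1 ≤ ρ(i,j) ≤ 1 + 1/(n+1) for all i ≠ j. Then there exist points q_0, …, q_n in Euclidean space ℝ^n with ‖q_i − q_j‖ = ρ(i,j) for all i, j; moreover, any points q_0, …, q_n in ℝ^n realizing these distances are affinely independent. -/
theorem dw_key (n : ℕ) (ρ : Fin (n + 1) → Fin (n + 1) → ℝ)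
    (hdiag : ∀ i, ρ i i = 0)
    (hbound : ∀ i j, i ≠ j → 1 ≤ ρ i j ∧ ρ i j ≤ 1 + 1 / (n + 1 : ℝ)) :
    ∃ ε : ℝ, 0 < ε ∧ ∀ x : Fin (n + 1) → ℝ, ∑ i, x i = 0 →
      ε * ∑ i, x i ^ 2 ≤ -∑ i, ∑ j, x i * x j * (ρ i j * ρ i j) := by
  set t : ℝ := 1 / (n + 1 : ℝ) with ht
  have ht0 : 0 < t := by positivity
  have htn : t * (n + 1) = 1 := by rw [ht]; field_simp
  obtain ⟨h, hh⟩ : ∃ h : ℝ, h = t + t ^ 2 / 2 := ⟨_, rfl⟩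
  have hh0 : 0 < h := by rw [hh]; positivity
  refine ⟨1 + 2 * h - h * (n + 1), ?_, ?_⟩
  · have : h * (n + 1) = 1 + t / 2 := by
      rw [hh]; linear_combination (1 + t / 2) * htn
    rw [this, hh]; nlinarith
  · intro x hx
    have hp : ∀ i j, x i * x j * (ρ i j * ρ i j) ≤
        (1 + h) * (x i * x j) + h * (|x i| * |x j|)
          - (if i = j then (1 + 2 * h) * x i ^ 2 else 0) := by
      intro i j
      by_cases hij : i = j
      · subst hij
        simp only [hdiag, if_true, abs_mul_abs_self]
        nlinarith
      · obtain ⟨h1, h2⟩ := hbound i j hij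
        rw [if_neg hij, ← abs_mul]
        have e1 : |ρ i j * ρ i j - (1 + h)| ≤ h := by
          rw [abs_le]; constructor <;> nlinarith
        have e2 := le_abs_self (x i * x j * (ρ i j * ρ i j - (1 + h)))
        rw [abs_mul] at e2
        nlinarith [abs_nonneg (x i * x j)]
    have hs := Finset.sum_le_sum (fun i (_ : i ∈ Finset.univ) =>
      Finset.sum_le_sum (fun j (_ : j ∈ Finset.univ) => hp i j))
    simp only [Finset.sum_sub_distrib, Finset.sum_add_distrib, ← Finset.mul_sum, hx,
      Finset.sum_ite_eq, Finset.mem_univ, if_true, mul_zero, Finset.sum_const_zero,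
      ← Finset.sum_mul] at hs
    have hc := sq_sum_le_card_mul_sum_sq (s := (Finset.univ : Finset (Fin (n+1)))) (f := fun i => |x i|)
    simp only [sq_abs, Finset.card_univ, Fintype.card_fin] at hc
    push_cast at hc
    nlinarith

open scoped MatrixOrder in
theorem dekster_wilker_embedding
    (n : ℕ) (hn : 1 ≤ n) (ρ : Fin (n + 1) → Fin (n + 1) → ℝ)
    (hsymm : ∀ i j, ρ i j = ρ j i)
    (hdiag : ∀ i, ρ i i = 0)
    (hbound : ∀ i j, i ≠ j → 1 ≤ ρ i j ∧ ρ i j ≤ 1 + 1 / (n + 1 : ℝ)) :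
    (∃ q : Fin (n + 1) → EuclideanSpace ℝ (Fin n),
      ∀ i j, ‖q i - q j‖ = ρ i j) ∧
    (∀ q : Fin (n + 1) → EuclideanSpace ℝ (Fin n),
      (∀ i j, ‖q i - q j‖ = ρ i j) → AffineIndependent ℝ q) := by
  obtain ⟨ε, hε, key⟩ := dw_key n ρ hdiag hbound
  have hnn : ∀ i j, 0 ≤ ρ i j := by
    intro i j
    by_cases hij : i = j
    · rw [hij, hdiag]
    · linarith [(hbound i j hij).1]
  constructor
  · let G : Matrix (Fin n) (Fin n) ℝ := fun i j =>
      (ρ 0 i.succ * ρ 0 i.succ + ρ 0 j.succ * ρ 0 j.succ - ρ i.succ j.succ * ρ i.succ j.succ) / 2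
    have hG : G.PosSemidef := by
      rw [Matrix.posSemidef_iff_dotProduct_mulVec]
      constructor
      · ext i j
        rw [Matrix.conjTranspose_apply, star_trivial]
        simp only [G, hsymm j.succ i.succ]
        ring
      · intro y
        have k := key (Fin.cons (-∑ i, y i) y) (by simp [Fin.sum_univ_succ])
        have k0 : 0 ≤ ε * ∑ i, (Fin.cons (-∑ i, y i) y : Fin (n+1) → ℝ) i ^ 2 := by positivity
        have k1 := k0.trans k
        simp only [Fin.sum_univ_succ, Fin.cons_zero, Fin.cons_succ, hdiag,
          Finset.sum_add_distrib] at k1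
        have e : star y ⬝ᵥ (G.mulVec y) = (∑ i, y i) * (∑ i, y i * (ρ 0 i.succ * ρ 0 i.succ))
            - (∑ i, ∑ j, y i * y j * (ρ i.succ j.succ * ρ i.succ j.succ)) / 2 := by
          have e1 : (∑ i, y i) * (∑ i, y i * (ρ 0 i.succ * ρ 0 i.succ)) =
              ∑ i, ∑ j, y i * (y j * (ρ 0 j.succ * ρ 0 j.succ)) := by
            rw [Finset.sum_mul_sum]
          have e2 : (∑ i, y i) * (∑ i, y i * (ρ 0 i.succ * ρ 0 i.succ)) =
              ∑ i, ∑ j, (y i * (ρ 0 i.succ * ρ 0 i.succ)) * y j := by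
            rw [mul_comm, Finset.sum_mul_sum]
          have e3 : star y ⬝ᵥ (G.mulVec y) = (∑ i, ∑ j, y i * (y j * (ρ 0 j.succ * ρ 0 j.succ))
              + ∑ i, ∑ j, (y i * (ρ 0 i.succ * ρ 0 i.succ)) * y j
              - ∑ i, ∑ j, y i * y j * (ρ i.succ j.succ * ρ i.succ j.succ)) / 2 := by
            simp only [dotProduct, Matrix.mulVec, star_trivial, Pi.star_apply, Finset.mul_sum,
              ← Finset.sum_add_distrib, ← Finset.sum_sub_distrib, Finset.sum_div, G]
            refine Finset.sum_congr rfl fun i _ => Finset.sum_congr rfl fun j _ => ?_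
            ring
          rw [e3, ← e1, ← e2]; ring
        have f1 : ∑ j, -(∑ i, y i) * y j * (ρ 0 j.succ * ρ 0 j.succ) =
            -((∑ i, y i) * (∑ i, y i * (ρ 0 i.succ * ρ 0 i.succ))) := by
          rw [← neg_mul, Finset.mul_sum]
          exact Finset.sum_congr rfl fun i _ => by ring
        have f2 : ∑ j : Fin n, y j * -(∑ i, y i) * (ρ j.succ 0 * ρ j.succ 0) =
            -((∑ i, y i) * (∑ i, y i * (ρ 0 i.succ * ρ 0 i.succ))) := by
          rw [← neg_mul, Finset.mul_sum]
          exact Finset.sum_congr rfl fun i _ => by rw [hsymm i.succ 0]; ring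
        rw [f1, f2] at k1
        rw [e]
        linarith
    obtain ⟨B, hB⟩ := CStarAlgebra.nonneg_iff_eq_star_mul_self.mp hG.nonneg
    have hin : ∀ i j, inner ℝ (WithLp.toLp 2 (fun k => B k i) : EuclideanSpace ℝ (Fin n))
        (WithLp.toLp 2 (fun k => B k j)) = G i j := by
      intro i j
      rw [hB]
      simp [Matrix.mul_apply, PiLp.inner_apply, Matrix.star_apply, mul_comm]
    have hns : ∀ i, ‖(WithLp.toLp 2 (fun k => B k i) : EuclideanSpace ℝ (Fin n))‖ ^ 2
        = ρ 0 i.succ ^ 2 := by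
      intro i
      rw [← real_inner_self_eq_norm_sq, hin]
      simp only [G, hdiag]; ring
    refine ⟨Fin.cons 0 (fun i => WithLp.toLp 2 (fun k => B k i)), ?_⟩
    intro i j
    rw [← sq_eq_sq₀ (norm_nonneg _) (hnn i j)]
    refine Fin.cases ?_ (fun i => ?_) i <;> refine Fin.cases ?_ (fun j => ?_) j
    · simp [hdiag]
    · simp only [Fin.cons_zero, Fin.cons_succ, zero_sub, norm_neg, hns]
    · simp only [Fin.cons_zero, Fin.cons_succ, sub_zero, hns, hsymm i.succ 0]
    · simp only [Fin.cons_succ]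
      rw [norm_sub_sq_real, hns, hns, hin]
      simp only [G]; ring
  · intro q hq
    rw [affineIndependent_iff_of_fintype]
    intro w hw hv
    rw [Finset.weightedVSub_eq_linear_combination _ hw] at hv
    have h1 := inner_sum_smul_sum_smul_of_sum_eq_zero q hw q hw
    rw [hv, inner_zero_left] at h1
    simp only [hq] at h1
    have h2 := key w hw
    have h3 : ∑ i, w i ^ 2 ≤ 0 := by
      by_contra hc
      push Not at hc
      have := mul_pos hε hc
      linarith
    have h4 := (Finset.sum_eq_zero_iff_of_nonneg (fun i _ => sq_nonneg (w i))).mp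
      (le_antisymm h3 (Finset.sum_nonneg fun i _ => sq_nonneg (w i)))
    intro i
    exact pow_eq_zero_iff (two_ne_zero) |>.mp (h4 i (Finset.mem_univ i))
end

section
/- Let n ≥ 1 and let p_1, …, p_{n+2} be distinct points of Euclidean space ℝ^n. Then the ratio of the maximum to the minimum of the pairwise distances satisfies max_{i ≠ j} ‖p_i − p_j‖ > (1 + 1/(n+2)) · min_{i ≠ j} ‖p_i − p_j‖. -/
theorem schutte_ratio
    (n : ℕ) (hn : 1 ≤ n) (p : Fin (n + 2) → EuclideanSpace ℝ (Fin n))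
    (hdist : Function.Injective p) :
    (1 + 1 / (n + 2 : ℝ)) *
      sInf {d : ℝ | ∃ i j, i ≠ j ∧ d = ‖p i - p j‖} <
      sSup {d : ℝ | ∃ i j, i ≠ j ∧ d = ‖p i - p j‖} := by
  set T : Set ℝ := {d : ℝ | ∃ i j, i ≠ j ∧ d = ‖p i - p j‖} with hT
  have hfin : T.Finite := by
    refine (Set.finite_range (fun q : Fin (n+2) × Fin (n+2) => ‖p q.1 - p q.2‖)).subset ?_
    rintro d ⟨i, j, -, rfl⟩
    exact ⟨(i, j), rfl⟩
  have hm : ∀ i j, i ≠ j → sInf T ≤ ‖p i - p j‖ := fun i j h =>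
    csInf_le hfin.bddBelow ⟨i, j, h, rfl⟩
  have hM : ∀ i j, i ≠ j → ‖p i - p j‖ ≤ sSup T := fun i j h =>
    le_csSup hfin.bddAbove ⟨i, j, h, rfl⟩
  have hm0 : 0 ≤ sInf T := by
    apply Real.sInf_nonneg
    rintro d ⟨i, j, -, rfl⟩
    exact norm_nonneg _
  have hM0 : 0 < sSup T := by
    have h01 : (0 : Fin (n+2)) ≠ 1 := by simp
    refine lt_of_lt_of_le ?_ (hM 0 1 h01)
    exact norm_pos_iff.2 (sub_ne_zero.2 (fun h => h01 (hdist h)))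
  generalize sInf T = m at *
  generalize sSup T = M at *
  let L : (Fin (n+2) → ℝ) →ₗ[ℝ] (EuclideanSpace ℝ (Fin n) × ℝ) :=
    (Fintype.linearCombination ℝ p).prod (Fintype.linearCombination ℝ (fun _ => (1:ℝ)))
  have hker : LinearMap.ker L ≠ ⊥ := LinearMap.ker_ne_bot_of_finrank_lt (by simp)
  obtain ⟨c, hc, hc0⟩ := Submodule.exists_mem_ne_zero_of_ne_bot hker
  have hc' : ∑ i, c i • p i = 0 ∧ ∑ i, c i = 0 := by
    simpa [L, Fintype.linearCombination_apply] using hc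
  obtain ⟨h1, h2⟩ := hc'
  have key := inner_sum_smul_sum_smul_of_sum_eq_zero (F := EuclideanSpace ℝ (Fin n))
    (s₁ := Finset.univ) (s₂ := Finset.univ) p h2 p h2
  rw [h1, inner_zero_left] at key
  have key2 : ∑ i, ∑ j, c i * c j * (‖p i - p j‖ * ‖p i - p j‖) = 0 := by linarith
  have hQ : 0 < ∑ i, c i ^ 2 := by
    obtain ⟨k, hk⟩ := Function.ne_iff.1 hc0
    exact Finset.sum_pos' (fun i _ => sq_nonneg _) ⟨k, Finset.mem_univ _, by
      have : c k ≠ 0 := hk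
      positivity⟩
  have hS : (∑ i, |c i|) ^ 2 ≤ (n + 2 : ℝ) * ∑ i, c i ^ 2 := by
    have := sq_sum_le_card_mul_sum_sq (s := Finset.univ) (f := fun i => |c i|)
    simpa using this
  have hb : ∀ i j, c i * c j * (‖p i - p j‖ * ‖p i - p j‖) ≤
      (M^2 + m^2)/2 * (c i * c j) + (M^2 - m^2)/2 * (|c i| * |c j|)
        - (if i = j then M^2 * c i ^ 2 else 0) := by
    intro i j
    split_ifs with h
    · subst h
      have := abs_mul_abs_self (c i)
      rw [this]
      simp only [sub_self, norm_zero]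
      nlinarith
    · have e1 : m^2 ≤ ‖p i - p j‖ * ‖p i - p j‖ := by nlinarith [hm i j h]
      have e2 : ‖p i - p j‖ * ‖p i - p j‖ ≤ M^2 := by nlinarith [hM i j h, norm_nonneg (p i - p j)]
      rw [← abs_mul]
      rcases abs_cases (c i * c j) with ⟨h, h'⟩ | ⟨h, h'⟩ <;> rw [h] <;> nlinarith
  have hsum := Finset.sum_le_sum (fun i (_ : i ∈ Finset.univ) =>
    Finset.sum_le_sum (fun j (_ : j ∈ Finset.univ) => hb i j))
  rw [key2] at hsum
  simp only [Finset.sum_sub_distrib, Finset.sum_add_distrib, ← Finset.mul_sum,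
    ← Finset.sum_mul, h2, Finset.sum_ite_eq, Finset.mem_univ, if_true] at hsum
  have hmM : m ≤ M := (hm 0 1 (by simp)).trans (hM 0 1 (by simp))
  have hd : 0 ≤ M^2 - m^2 := by nlinarith
  have h3 := mul_le_mul_of_nonneg_left hS hd
  have h4 : 0 ≤ ((M^2-m^2) * (n+2) - 2 * M^2) * ∑ i, c i ^ 2 := by nlinarith
  have h5 : 0 ≤ (M^2-m^2) * (n+2) - 2 * M^2 := nonneg_of_mul_nonneg_left h4 hQ
  have hn' : (1:ℝ) ≤ n := by exact_mod_cast hn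
  generalize (n:ℝ) = x at *
  have h6 : (x+2) * m^2 ≤ x * M^2 := by linarith
  have h7 : (1 + 1/(x+2)) * m = ((x+3) * m) / (x+2) := by
    field_simp; ring
  rw [h7, div_lt_iff₀ (by linarith)]
  refine lt_of_pow_lt_pow_left₀ 2 (by positivity) ?_
  have h8 : (x+3)^2 * ((x+2) * m^2) ≤ (x+3)^2 * (x * M^2) :=
    mul_le_mul_of_nonneg_left h6 (by positivity)
  have h9 : (x+3)^2 * (x * M^2) < (x+2)^3 * M^2 := by
    have : 0 < M^2 * (3*x+8) := by positivity
    nlinarith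
  have h10 : (x+2) * ((x+3)*m)^2 < (x+2) * (M*(x+2))^2 := by nlinarith
  exact lt_of_mul_lt_mul_left h10 (by linarith)
end

section
/- Let X be a real normed vector space of finite dimension n ≥ 1 and suppose there exists a linear equivalence T : X → EuclideanSpace ℝ (Fin n) such that ‖x‖ ≤ ‖T x‖ ≤ (1 + 1/(n+1)) · ‖x‖ for all x ∈ X (i.e. the Banach–Mazur distance from X to ℓ₂^n is at most 1 + 1/(n+1)). Then every equilateral set in X of at most n points can be extended: if p_1, …, p_m ∈ X with m ≤ n satisfy ‖p_i − p_j‖ = 1 for all i ≠ j, then there exists p ∈ X with ‖p − p_i‖ = 1 for all i. In particular X contains an equilateral set of n+1 points. -/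
open Module

def BDDom {T I L : Type*} [LinearOrder L] (ρ : I → T → L) (σ : Finset T) : Prop :=
  ∀ y, ∃ i, ∀ x ∈ σ, ρ i y ≤ ρ i x

open Classical in
theorem bd_door_two {T I L : Type*} [Fintype T] [Fintype I] [LinearOrder L]
    (ρ : I → T → L) (hinj : ∀ i, Function.Injective (ρ i)) (s : I → T)
    (h2 : ∀ i k x, k ≠ i → (∀ j, x ≠ s j) → ρ k x < ρ k (s i))
    (σ : Finset T) (hd : BDDom ρ σ) (hcard : σ.card + 1 = Fintype.card I)
    (x0 : T) (hx0 : x0 ∈ σ) (hx0s : ∀ j, x0 ≠ s j) :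
    (Finset.univ.filter (fun y => y ∉ σ ∧ BDDom ρ (insert y σ))).card = 2 := by
  have hne : σ.Nonempty := ⟨x0, hx0⟩
  have hmu : ∀ i, ∃ m ∈ σ, ∀ x ∈ σ, ρ i m ≤ ρ i x := fun i => σ.exists_min_image (ρ i) hne
  choose μ hμ hmin using hmu
  have hsurj : ∀ y ∈ σ, ∃ i, μ i = y := by
    intro y hy
    obtain ⟨i, hi⟩ := hd y
    exact ⟨i, hinj i (le_antisymm (hmin i y hy) (hi _ (hμ i)))⟩
  obtain ⟨i, j, hij, hmij⟩ : ∃ i j, i ≠ j ∧ μ i = μ j := by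
    have := Fintype.exists_ne_map_eq_of_card_lt (fun i => (⟨μ i, hμ i⟩ : σ)) (by
      simp; omega)
    obtain ⟨i, j, h, h'⟩ := this
    exact ⟨i, j, h, by simpa using h'⟩
  have himg : ∀ a, (a = i ∨ a = j) → (Finset.univ.erase a).image μ = σ := by
    intro a ha
    ext y
    simp only [Finset.mem_image, Finset.mem_erase, Finset.mem_univ, and_true]
    constructor
    · rintro ⟨k, -, rfl⟩; exact hμ k
    · intro hy
      obtain ⟨k, rfl⟩ := hsurj y hy
      by_cases hk : k = a
      · rcases ha with rfl | rfl
        · exact ⟨j, hij.symm, by rw [hk, hmij]⟩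
        · exact ⟨i, hij, by rw [hk, hmij]⟩
      · exact ⟨k, hk, rfl⟩
  have hinjOn : ∀ a, (a = i ∨ a = j) → ∀ k l, k ≠ a → l ≠ a → μ k = μ l → k = l := by
    intro a ha k l hk hl hkl
    have : Set.InjOn μ (Finset.univ.erase a : Finset I) := by
      rw [← Finset.card_image_iff, himg a ha, Finset.card_erase_of_mem (Finset.mem_univ _),
        Finset.card_univ]
      omega
    exact this (by simpa using hk) (by simpa using hl) hkl
  -- maximal elements
  have hM : ∀ a, ∃ y, (∀ k, k ≠ a → ρ k (μ k) < ρ k y) ∧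
      ∀ z, (∀ k, k ≠ a → ρ k (μ k) < ρ k z) → ρ a z ≤ ρ a y := by
    intro a
    have := (Finset.univ.filter (fun y => ∀ k, k ≠ a → ρ k (μ k) < ρ k y)).exists_max_image (ρ a)
      ⟨s a, by
        simp only [Finset.mem_filter, Finset.mem_univ, true_and]
        intro k hk
        exact lt_of_le_of_lt (hmin k x0 hx0) (h2 a k x0 hk hx0s)⟩
    obtain ⟨y, hy, hy'⟩ := this
    simp only [Finset.mem_filter, Finset.mem_univ, true_and] at hy hy'
    exact ⟨y, hy, hy'⟩
  choose Y hY hYmax using hM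
  have hfil : Finset.univ.filter (fun y => y ∉ σ ∧ BDDom ρ (insert y σ)) = {Y i, Y j} := by
    ext y
    simp only [Finset.mem_filter, Finset.mem_univ, true_and, Finset.mem_insert,
      Finset.mem_singleton]
    constructor
    · rintro ⟨hy, hdy⟩
      obtain ⟨k0, hk0⟩ := hdy y
      have hk0' : ρ k0 y ≤ ρ k0 (μ k0) := hk0 _ (Finset.mem_insert_of_mem (hμ k0))
      set K := Finset.univ.filter (fun k => ρ k (μ k) < ρ k y) with hK
      have hKs : σ ⊆ K.image μ := by
        intro x hx
        obtain ⟨k, hk⟩ := hdy x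
        have hxk : μ k = x := hinj k (le_antisymm (hmin k x hx)
          (hk _ (Finset.mem_insert_of_mem (hμ k))))
        refine Finset.mem_image.2 ⟨k, ?_, hxk⟩
        simp only [hK, Finset.mem_filter, Finset.mem_univ, true_and]
        rw [hxk]
        refine lt_of_le_of_ne (hk _ (Finset.mem_insert_self _ _)) ?_
        intro h
        exact hy (hinj k h ▸ hx)
      have hKe : K = Finset.univ.erase k0 := by
        apply Finset.eq_of_subset_of_card_le
        · intro k hk
          simp only [hK, Finset.mem_filter, Finset.mem_univ, true_and] at hk
          simp only [Finset.mem_erase, Finset.mem_univ, and_true]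
          rintro rfl
          exact absurd hk (not_lt.2 hk0')
        · rw [Finset.card_erase_of_mem (Finset.mem_univ _), Finset.card_univ]
          have := (Finset.card_le_card hKs).trans Finset.card_image_le
          omega
      have hKm : ∀ k, k ≠ k0 → ρ k (μ k) < ρ k y := by
        intro k hk
        have : k ∈ K := by rw [hKe]; simpa using hk
        simpa [hK] using this
      have hk0ij : k0 = i ∨ k0 = j := by
        by_contra hcon
        push Not at hcon
        obtain ⟨k, hk, hkk⟩ := Finset.mem_image.1 (hKs (hμ k0))
        rw [hKe] at hk
        have hk : k ≠ k0 := by simpa using hk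
        by_cases hki : k = i
        · exact hk (hinjOn j (Or.inr rfl) k k0 (by rw [hki]; exact hij) hcon.2 hkk)
        · exact hk (hinjOn i (Or.inl rfl) k k0 hki hcon.1 hkk)
      have hyY : y = Y k0 := by
        apply hinj k0
        apply le_antisymm (hYmax k0 y hKm)
        obtain ⟨k, hk⟩ := hdy (Y k0)
        by_cases hkk : k = k0
        · subst hkk; exact hk _ (Finset.mem_insert_self _ _)
        · exact absurd (hk _ (Finset.mem_insert_of_mem (hμ k))) (not_le.2 (hY k0 k hkk))
      rcases hk0ij with h | h
      · left; rw [hyY, h]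
      · right; rw [hyY, h]
    · have key : ∀ a, (a = i ∨ a = j) → (Y a ∉ σ ∧ BDDom ρ (insert (Y a) σ)) := by
        intro a ha
        constructor
        · intro hya
          rw [← himg a ha] at hya
          obtain ⟨k, hk, hkk⟩ := Finset.mem_image.1 hya
          have := hY a k (by simpa using hk)
          rw [hkk] at this
          exact lt_irrefl _ this
        · intro z
          by_cases hz : ∀ k, k ≠ a → ρ k (μ k) < ρ k z
          · refine ⟨a, ?_⟩
            intro x hx
            rcases Finset.mem_insert.1 hx with rfl | hxs
            · exact hYmax a z hz
            · obtain ⟨k, hk⟩ := hd z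
              by_cases hka : k = a
              · subst hka; exact hk x hxs
              · exact absurd (hk _ (hμ k)) (not_le.2 (hz k hka))
          · push Not at hz
            obtain ⟨k, hka, hk⟩ := hz
            refine ⟨k, ?_⟩
            intro x hx
            rcases Finset.mem_insert.1 hx with rfl | hx
            · exact hk.trans (hY a k hka).le
            · exact hk.trans (hmin k x hx)
      rintro (rfl | rfl)
      · exact key i (Or.inl rfl)
      · exact key j (Or.inr rfl)
  rw [hfil, Finset.card_pair]
  intro h
  obtain ⟨k, hk⟩ := hd (Y i)
  have hk := hk _ (hμ k)
  by_cases hki : k = i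
  · subst hki
    rw [h] at hk
    exact absurd hk (not_le.2 (hY j k hij))
  · exact absurd hk (not_le.2 (hY i k hki))

open Classical in
theorem bd_door_one {T I L : Type*} [Fintype T] [Fintype I] [LinearOrder L]
    (ρ : I → T → L) (hinj : ∀ i, Function.Injective (ρ i)) (s : I → T)
    (h1 : ∀ i x, x ≠ s i → ρ i (s i) < ρ i x)
    (h2 : ∀ i k x, k ≠ i → (∀ j, x ≠ s j) → ρ k x < ρ k (s i))
    (hex : ∃ x, ∀ j, x ≠ s j) (i0 : I) :
    (Finset.univ.filter (fun y => y ∉ (Finset.univ.erase i0).image s ∧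
      BDDom ρ (insert y ((Finset.univ.erase i0).image s)))).card = 1 := by
  obtain ⟨x0, hx0⟩ := hex
  obtain ⟨y, hy, hmax⟩ := (Finset.univ.filter (fun x => ∀ j, x ≠ s j)).exists_max_image (ρ i0)
    ⟨x0, by simpa using hx0⟩
  simp only [Finset.mem_filter, Finset.mem_univ, true_and] at hy hmax
  have h1' : ∀ i x, ρ i (s i) ≤ ρ i x := by
    intro i x
    by_cases h : x = s i
    · rw [h]
    · exact (h1 i x h).le
  rw [Finset.card_eq_one]
  refine ⟨y, ?_⟩
  ext w
  simp only [Finset.mem_filter, Finset.mem_univ, true_and, Finset.mem_singleton]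
  constructor
  · rintro ⟨hw, hdw⟩
    have hwns : ∀ j, w ≠ s j := by
      rintro j rfl
      by_cases hj : j = i0
      · subst hj
        obtain ⟨i, hi⟩ := hdw x0
        refine absurd (hi (s i) ?_) (not_le.2 (h1 i x0 (hx0 i)))
        by_cases hi : i = j
        · subst hi; exact Finset.mem_insert_self _ _
        · exact Finset.mem_insert_of_mem (Finset.mem_image_of_mem _ (by simpa using hi))
      · exact hw (Finset.mem_image_of_mem _ (by simpa using hj))
    apply hinj i0
    apply le_antisymm (hmax w hwns)
    obtain ⟨k, hk⟩ := hdw y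
    by_cases hk0 : k = i0
    · subst hk0; exact hk _ (Finset.mem_insert_self _ _)
    · exact absurd (hk (s k) (Finset.mem_insert_of_mem (Finset.mem_image_of_mem _ (by simpa using hk0))))
        (not_le.2 (h1 k y (hy k)))
  · rintro rfl
    constructor
    · intro h
      obtain ⟨k, -, hk⟩ := Finset.mem_image.1 h
      exact hy k hk.symm
    · intro z
      by_cases hz : ∀ j, z ≠ s j
      · refine ⟨i0, ?_⟩
        intro x hx
        rcases Finset.mem_insert.1 hx with rfl | hx
        · exact hmax z hz
        · obtain ⟨k, hk, rfl⟩ := Finset.mem_image.1 hx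
          exact (h2 k i0 z (by simpa using (Finset.mem_erase.1 hk).1.symm) hz).le
      · push Not at hz
        obtain ⟨k, rfl⟩ := hz
        exact ⟨k, fun x _ => h1' k x⟩

open Classical in
theorem bd_room_even {T I : Type*} [Fintype T] [Fintype I] (c : T → I) (i0 : I)
    (τ : Finset T) (hcard : τ.card = Fintype.card I) (hnot : τ.image c ≠ Finset.univ) :
    Even (Finset.univ.filter (fun x => x ∈ τ ∧
      (τ.erase x).image c = Finset.univ.erase i0)).card := by
  rcases Finset.eq_empty_or_nonempty (Finset.univ.filter (fun x => x ∈ τ ∧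
      (τ.erase x).image c = Finset.univ.erase i0)) with h | ⟨x, hx⟩
  · rw [h]; simp
  · simp only [Finset.mem_filter, Finset.mem_univ, true_and] at hx
    obtain ⟨hxτ, him⟩ := hx
    have hinj : Set.InjOn c (τ.erase x : Finset T) := by
      rw [← Finset.card_image_iff, him, Finset.card_erase_of_mem (Finset.mem_univ _),
        Finset.card_erase_of_mem hxτ, Finset.card_univ, hcard]
    have hcx : c x ≠ i0 := by
      intro h
      apply hnot
      rw [← Finset.insert_erase hxτ, Finset.image_insert, him, h,
        Finset.insert_erase (Finset.mem_univ _)]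
    obtain ⟨x', hx', hcx'⟩ : ∃ x' ∈ τ.erase x, c x' = c x := by
      rw [← Finset.mem_image, him]; simpa using hcx
    have hx'τ : x' ∈ τ := Finset.mem_of_mem_erase hx'
    have hxx' : x' ≠ x := Finset.ne_of_mem_erase hx'
    have : Finset.univ.filter (fun x => x ∈ τ ∧
      (τ.erase x).image c = Finset.univ.erase i0) = {x, x'} := by
      ext y
      simp only [Finset.mem_filter, Finset.mem_univ, true_and, Finset.mem_insert,
        Finset.mem_singleton]
      constructor
      · rintro ⟨hy, hyim⟩
        by_contra hcon
        push Not at hcon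
        have hymem : c y ∈ (τ.erase y).image c := by
          rw [hyim, ← him]
          exact Finset.mem_image_of_mem _ (Finset.mem_erase.2 ⟨hcon.1, hy⟩)
        obtain ⟨z, hz, hzy⟩ := Finset.mem_image.1 hymem
        have hyx : y ∈ ((τ.erase x : Finset T) : Set T) := by simpa using ⟨hy, hcon.1⟩
        by_cases hzx : z = x
        · subst hzx
          exact hcon.2 (hinj hyx (Finset.mem_coe.2 hx') (by rw [hcx', hzy]))
        · have : z = y := hinj (by simpa using ⟨Finset.mem_of_mem_erase hz, hzx⟩) hyx hzy
          exact Finset.ne_of_mem_erase hz this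
      · rintro (rfl | rfl)
        · exact ⟨hxτ, him⟩
        · refine ⟨hx'τ, ?_⟩
          rw [← him]
          ext k
          simp only [Finset.mem_image, Finset.mem_erase]
          constructor
          · rintro ⟨z, ⟨hz, hzτ⟩, rfl⟩
            by_cases hzx : z = x
            · exact ⟨y, ⟨hxx', hx'τ⟩, by rw [hzx, hcx']⟩
            · exact ⟨z, ⟨hzx, hzτ⟩, rfl⟩
          · rintro ⟨z, ⟨hz, hzτ⟩, rfl⟩
            by_cases hzx : z = y
            · exact ⟨x, ⟨hxx'.symm, hxτ⟩, by rw [hzx, hcx']⟩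
            · exact ⟨z, ⟨hzx, hzτ⟩, rfl⟩
    rw [this, Finset.card_pair hxx'.symm]
    exact even_two

open Classical in
theorem bd_scarf {T I L : Type*} [Fintype T] [Fintype I] [LinearOrder L]
    (ρ : I → T → L) (hinj : ∀ i, Function.Injective (ρ i)) (s : I → T)
    (h1 : ∀ i x, x ≠ s i → ρ i (s i) < ρ i x)
    (h2 : ∀ i k x, k ≠ i → (∀ j, x ≠ s j) → ρ k x < ρ k (s i))
    (hex : ∃ x, ∀ j, x ≠ s j) (i0 : I) (c : T → I) (hc : ∀ i, c (s i) = i) :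
    ∃ τ : Finset T, BDDom ρ τ ∧ τ.image c = Finset.univ := by
  by_contra hcon
  push Not at hcon
  have hsinj : Function.Injective s := fun a b h => by rw [← hc a, h, hc]
  have hpos : 0 < Fintype.card I := Fintype.card_pos_iff.2 ⟨i0⟩
  set D : Finset (Finset T) := Finset.univ.filter (fun σ => BDDom ρ σ ∧
    σ.image c = Finset.univ.erase i0 ∧ σ.card + 1 = Fintype.card I) with hD
  set R : Finset (Finset T) := Finset.univ.filter (fun τ => BDDom ρ τ ∧
    τ.card = Fintype.card I) with hR
  have hmono : ∀ σ τ : Finset T, σ ⊆ τ → BDDom ρ τ → BDDom ρ σ := by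
    intro σ τ h hτ y
    obtain ⟨i, hi⟩ := hτ y
    exact ⟨i, fun x hx => hi x (h hx)⟩
  set P : Finset T → Finset T := fun σ =>
    Finset.univ.filter (fun y => y ∉ σ ∧ BDDom ρ (insert y σ)) with hP
  set Q : Finset T → Finset T := fun τ => Finset.univ.filter (fun x => x ∈ τ ∧
      (τ.erase x).image c = Finset.univ.erase i0) with hQ
  have hcount : ∑ σ ∈ D, (P σ).card = ∑ τ ∈ R, (Q τ).card := by
    rw [← Finset.card_sigma, ← Finset.card_sigma]
    refine Finset.card_bij' (fun p _ => ⟨insert p.2 p.1, p.2⟩) (fun p _ => ⟨p.1.erase p.2, p.2⟩)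
      ?_ ?_ ?_ ?_
    · rintro ⟨σ, y⟩ h
      simp only [hD, hP, hR, hQ, Finset.mem_sigma, Finset.mem_filter, Finset.mem_univ,
        true_and] at h ⊢
      obtain ⟨⟨h1, h2, h3⟩, h4, h5⟩ := h
      refine ⟨⟨h5, ?_⟩, Finset.mem_insert_self _ _, ?_⟩
      · rw [Finset.card_insert_of_notMem h4, h3]
      · rw [Finset.erase_insert h4, h2]
    · rintro ⟨τ, x⟩ h
      simp only [hD, hP, hR, hQ, Finset.mem_sigma, Finset.mem_filter, Finset.mem_univ,
        true_and] at h ⊢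
      obtain ⟨⟨h1, h2⟩, h4, h5⟩ := h
      refine ⟨⟨hmono _ _ (Finset.erase_subset _ _) h1, h5, ?_⟩, Finset.notMem_erase _ _, ?_⟩
      · rw [Finset.card_erase_add_one h4, h2]
      · rwa [Finset.insert_erase h4]
    · rintro ⟨σ, y⟩ h
      simp only [hP, Finset.mem_sigma, Finset.mem_filter, Finset.mem_univ, true_and] at h
      simp [Finset.erase_insert h.2.1]
    · rintro ⟨τ, x⟩ h
      simp only [hQ, Finset.mem_sigma, Finset.mem_filter, Finset.mem_univ, true_and] at h
      simp [Finset.insert_erase h.2.1]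
  have heven : Even (∑ τ ∈ R, (Q τ).card) := by
    apply Finset.even_sum
    intro τ hτ
    simp only [hR, Finset.mem_filter, Finset.mem_univ, true_and] at hτ
    exact bd_room_even c i0 τ hτ.2 (hcon τ hτ.1)
  set σ0 := (Finset.univ.erase i0).image s with hσ0
  have hσ0D : σ0 ∈ D := by
    simp only [hD, Finset.mem_filter, Finset.mem_univ, true_and]
    refine ⟨?_, ?_, ?_⟩
    · have := bd_door_one ρ hinj s h1 h2 hex i0
      obtain ⟨y, hy⟩ := Finset.card_pos.1 (by rw [this]; exact one_pos)
      simp only [Finset.mem_filter, Finset.mem_univ, true_and] at hy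
      exact hmono _ _ (Finset.subset_insert _ _) hy.2
    · rw [hσ0, Finset.image_image]
      have : c ∘ s = id := funext hc
      rw [this, Finset.image_id]
    · rw [hσ0, Finset.card_image_of_injective _ hsinj,
        Finset.card_erase_add_one (Finset.mem_univ _), Finset.card_univ]
  have hodd : Odd (∑ σ ∈ D, (P σ).card) := by
    rw [← Finset.add_sum_erase _ _ hσ0D]
    have e1 : (P σ0).card = 1 := bd_door_one ρ hinj s h1 h2 hex i0
    rw [e1]
    apply Odd.add_even odd_one
    apply Finset.even_sum
    intro σ hσ
    obtain ⟨hne, hσ⟩ := Finset.mem_erase.1 hσ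
    simp only [hD, Finset.mem_filter, Finset.mem_univ, true_and] at hσ
    obtain ⟨hd, him, hcard⟩ := hσ
    have : ∃ x0 ∈ σ, ∀ j, x0 ≠ s j := by
      by_contra hcon2
      push Not at hcon2
      apply hne
      apply Finset.eq_of_subset_of_card_le
      · intro x hx
        obtain ⟨j, rfl⟩ := hcon2 x hx
        have : c (s j) ∈ Finset.univ.erase i0 := him ▸ Finset.mem_image_of_mem c hx
        rw [hc] at this
        exact Finset.mem_image_of_mem _ this
      · rw [hσ0, Finset.card_image_of_injective _ hsinj,
          Finset.card_erase_of_mem (Finset.mem_univ _), Finset.card_univ]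
        omega
    obtain ⟨x0, hx0, hx0s⟩ := this
    have e2 : (P σ).card = 2 := bd_door_two ρ hinj s h2 σ hd hcard x0 hx0 hx0s
    rw [e2]; exact even_two
  rw [hcount] at hodd
  exact (Nat.not_even_iff_odd.2 hodd) heven

open Classical in
theorem bd_approx {I : Type*} [Fintype I] [Nonempty I] (f : (I → ℝ) → (I → ℝ))
    (hf : ∀ x ∈ stdSimplex ℝ I, f x ∈ stdSimplex ℝ I) (k : ℕ) (hk : 0 < k) :
    ∃ z ∈ stdSimplex ℝ I, ∀ i, ∃ w ∈ stdSimplex ℝ I,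
      (∀ j, |w j - z j| ≤ (Fintype.card I : ℝ) / k) ∧ w i ≤ f w i + (Fintype.card I : ℝ) / k := by
  have hkR : (0 : ℝ) < k := by exact_mod_cast hk
  let G := {x : I → ℕ // x ∈ Finset.piAntidiag (Finset.univ : Finset I) k}
  have hG : ∀ x : G, ∑ i, x.1 i = k := by
    intro x
    have := x.2
    rw [Finset.mem_piAntidiag] at this
    exact this.1
  have hGle : ∀ (x : G) i, x.1 i ≤ k := by
    intro x i
    refine le_trans ?_ (hG x).le
    exact Finset.single_le_sum (f := x.1) (fun _ _ => Nat.zero_le _) (Finset.mem_univ i)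
  let pt : G → I → ℝ := fun x i => (x.1 i : ℝ) / k
  have hpt : ∀ x, pt x ∈ stdSimplex ℝ I := by
    intro x
    refine ⟨fun i => by positivity, ?_⟩
    simp only [pt]
    rw [← Finset.sum_div, div_eq_one_iff_eq hkR.ne']
    exact_mod_cast hG x
  have hcol : ∀ x : G, ∃ i, pt x i ≤ f (pt x) i := by
    intro x
    by_contra hcon
    push Not at hcon
    have := Finset.sum_lt_sum_of_nonempty (s := Finset.univ) Finset.univ_nonempty
      (fun i _ => hcon i)
    rw [(hf _ (hpt x)).2, (hpt x).2] at this
    exact lt_irrefl _ this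
  choose col hcol using hcol
  let a : I → (G ⊕ I) → ℤ := fun i t => Sum.elim (fun x => (x.1 i : ℤ))
    (fun j => if i = j then -1 else (k : ℤ) + 1) t
  let e := Fintype.equivFin (G ⊕ I)
  let ρ : I → (G ⊕ I) → (ℤ ×ₗ Fin (Fintype.card (G ⊕ I))) := fun i t => toLex (a i t, e t)
  have hlt : ∀ i t t', a i t < a i t' → ρ i t < ρ i t' := by
    intro i t t' h
    exact Prod.Lex.toLex_lt_toLex.2 (Or.inl h)
  have hle : ∀ i t t', ρ i t ≤ ρ i t' → a i t ≤ a i t' := by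
    intro i t t' h
    by_contra hc
    exact absurd h (not_le.2 (hlt i t' t (not_le.1 hc)))
  obtain ⟨i0⟩ := ‹Nonempty I›
  have g0 : G := ⟨fun i => if i = i0 then k else 0, by
    rw [Finset.mem_piAntidiag]; simp⟩
  obtain ⟨τ, hτ, hτc⟩ := bd_scarf ρ (by
      intro i t t' h
      have h : (a i t, e t) = (a i t', e t') := toLex.injective h
      exact e.injective (Prod.ext_iff.1 h).2)
    (fun i => Sum.inr i) (by
      rintro i (x | j) hx
      · apply hlt; simp only [a, Sum.elim_inl, Sum.elim_inr, if_true]; omega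
      · apply hlt
        have : i ≠ j := by rintro rfl; exact hx rfl
        simp only [a, Sum.elim_inr, if_true, if_neg this]; omega)
    (by
      rintro i j (x | l) hij hx
      · apply hlt
        simp only [a, Sum.elim_inl, Sum.elim_inr, if_neg hij]
        have := hGle x j
        omega
      · exact absurd rfl (hx l))
    ⟨Sum.inl g0, by simp⟩ i0 (Sum.elim col id) (by simp)
  -- the set of missing slacks
  set C : Finset I := Finset.univ.filter (fun i => Sum.inr i ∉ τ) with hC
  have hdom : ∀ y : G, ∃ i ∈ C, ∀ x : G, Sum.inl x ∈ τ → y.1 i ≤ x.1 i := by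
    intro y
    obtain ⟨i, hi⟩ := hτ (Sum.inl y)
    refine ⟨i, ?_, ?_⟩
    · simp only [hC, Finset.mem_filter, Finset.mem_univ, true_and]
      intro hmem
      have := hle _ _ _ (hi _ hmem)
      simp only [a, Sum.elim_inl, Sum.elim_inr, if_true] at this
      omega
    · intro x hx
      have := hle _ _ _ (hi _ hx)
      simp only [a, Sum.elim_inl] at this
      exact_mod_cast this
  have hcolC : ∀ i ∈ C, ∃ x : G, Sum.inl x ∈ τ ∧ col x = i := by
    intro i hi
    have : i ∈ τ.image (Sum.elim col id) := by rw [hτc]; exact Finset.mem_univ _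
    obtain ⟨t, ht, hti⟩ := Finset.mem_image.1 this
    rcases t with x | j
    · exact ⟨x, ht, hti⟩
    · simp only [hC, Finset.mem_filter, Finset.mem_univ, true_and] at hi
      simp only [Sum.elim_inr, id] at hti
      subst hti
      exact absurd ht hi
  obtain ⟨i1, hi1, -⟩ := hdom g0
  obtain ⟨x1, hx1, -⟩ := hcolC i1 hi1
  have hmin : ∀ i, ∃ m : ℕ, (∃ x : G, Sum.inl x ∈ τ ∧ x.1 i = m) ∧
      ∀ x : G, Sum.inl x ∈ τ → m ≤ x.1 i := by
    intro i
    obtain ⟨x, hx, hxm⟩ := (Finset.univ.filter (fun x : G => Sum.inl x ∈ τ)).exists_min_image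
      (fun x => x.1 i) ⟨x1, by simpa using hx1⟩
    simp only [Finset.mem_filter, Finset.mem_univ, true_and] at hx hxm
    exact ⟨x.1 i, ⟨x, hx, rfl⟩, hxm⟩
  choose m hm hmle using hmin
  have hsum : k < ∑ i ∈ C, (m i + 1) := by
    by_contra hcon
    push Not at hcon
    let y : I → ℕ := fun i => (if i ∈ C then m i + 1 else 0) +
      (if i = i0 then k - ∑ i ∈ C, (m i + 1) else 0)
    have hy : y ∈ Finset.piAntidiag (Finset.univ : Finset I) k := by
      rw [Finset.mem_piAntidiag]
      refine ⟨?_, fun _ _ => Finset.mem_univ _⟩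
      simp only [y, Finset.sum_add_distrib, Finset.sum_ite_eq', Finset.mem_univ, if_true]
      rw [Finset.sum_ite_mem, Finset.univ_inter]
      rw [← Finset.sum_add_distrib]
      omega
    obtain ⟨i, hi, hix⟩ := hdom ⟨y, hy⟩
    obtain ⟨x, hx, hxm⟩ := hm i
    have := hix x hx
    simp only [y, if_pos hi] at this
    omega
  have hbound : ∀ x : G, Sum.inl x ∈ τ → ∀ i, x.1 i ≤ (if i ∈ C then m i else 0) + Fintype.card I := by
    intro x hx i
    have e1 : ∑ i ∈ C, (m i + 1) = ∑ i, (if i ∈ C then m i else 0) + C.card := by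
      rw [Finset.sum_add_distrib, Finset.sum_ite_mem, Finset.univ_inter]; simp
    have e2 : C.card ≤ Fintype.card I := Finset.card_le_univ _
    have e3 := hG x
    rw [← Finset.add_sum_erase _ _ (Finset.mem_univ i)] at e3
    rw [← Finset.add_sum_erase _ _ (Finset.mem_univ i)] at e1
    have e4 : ∑ j ∈ Finset.univ.erase i, (if j ∈ C then m j else 0) ≤
        ∑ j ∈ Finset.univ.erase i, x.1 j := by
      apply Finset.sum_le_sum
      intro j _
      split_ifs
      · exact hmle j x hx
      · exact Nat.zero_le _
    omega
  have hlow : ∀ x : G, Sum.inl x ∈ τ → ∀ i, (if i ∈ C then m i else 0) ≤ x.1 i := by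
    intro x hx i
    split_ifs
    · exact hmle i x hx
    · exact Nat.zero_le _
  refine ⟨pt x1, hpt x1, ?_⟩
  intro i
  by_cases hi : i ∈ C
  · obtain ⟨x, hx, hxi⟩ := hcolC i hi
    refine ⟨pt x, hpt x, ?_, ?_⟩
    · intro j
      have a1 := hbound x hx j
      have a2 := hbound x1 hx1 j
      have a3 := hlow x hx j
      have a4 := hlow x1 hx1 j
      simp only [pt]
      rw [← sub_div, abs_div, abs_of_pos hkR]
      gcongr
      rw [abs_le]
      have b1 : x.1 j ≤ x1.1 j + Fintype.card I := by omega
      have b2 : x1.1 j ≤ x.1 j + Fintype.card I := by omega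
      have b1 : (x.1 j : ℝ) ≤ x1.1 j + Fintype.card I := by exact_mod_cast b1
      have b2 : (x1.1 j : ℝ) ≤ x.1 j + Fintype.card I := by exact_mod_cast b2
      constructor <;> linarith
    · have := hcol x
      rw [hxi] at this
      have h3 : (0 : ℝ) ≤ (Fintype.card I : ℝ) / k := by positivity
      linarith
  · refine ⟨pt x1, hpt x1, ?_, ?_⟩
    · intro j
      simp only [sub_self, abs_zero]
      positivity
    · have a2 := hbound x1 hx1 i
      rw [if_neg hi, zero_add] at a2
      have h0 := (hf _ (hpt x1)).1 i
      have : pt x1 i ≤ (Fintype.card I : ℝ) / k := by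
        simp only [pt]
        gcongr
      linarith

theorem bd_brouwer_simplex {I : Type*} [Fintype I] [Nonempty I] (f : (I → ℝ) → (I → ℝ))
    (hf : ∀ x ∈ stdSimplex ℝ I, f x ∈ stdSimplex ℝ I) (hcont : ContinuousOn f (stdSimplex ℝ I)) :
    ∃ x ∈ stdSimplex ℝ I, f x = x := by
  have h := fun k : ℕ => bd_approx f hf (k + 1) (Nat.succ_pos k)
  choose z hz w hw hwz hwf using h
  obtain ⟨x, hx, φ, hφ, hlim⟩ := (isCompact_stdSimplex ℝ I).tendsto_subseq hz
  have hN : Filter.Tendsto (fun k : ℕ => (Fintype.card I : ℝ) / ((φ k + 1 : ℕ) : ℝ)) Filter.atTop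
      (nhds 0) := by
    have := (tendsto_const_div_atTop_nhds_zero_nat (Fintype.card I : ℝ)).comp
      ((Filter.tendsto_add_atTop_nat 1).comp hφ.tendsto_atTop)
    exact this
  have key : ∀ i, x i ≤ f x i := by
    intro i
    have hwl : Filter.Tendsto (fun k => w (φ k) i) Filter.atTop (nhds x) := by
      rw [tendsto_pi_nhds] at hlim ⊢
      intro j
      have h1 : Filter.Tendsto (fun k => w (φ k) i j - z (φ k) j) Filter.atTop (nhds 0) :=
        squeeze_zero_norm (fun k => hwz (φ k) i j) hN
      have := h1.add (hlim j)
      simpa using this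
    have hfl : Filter.Tendsto (fun k => f (w (φ k) i)) Filter.atTop (nhds (f x)) :=
      (hcont x hx).tendsto.comp (tendsto_nhdsWithin_iff.2
        ⟨hwl, Filter.Eventually.of_forall (fun k => hw (φ k) i)⟩)
    have l1 := (tendsto_pi_nhds.1 hwl) i
    have l2 := ((tendsto_pi_nhds.1 hfl) i).add hN
    rw [add_zero] at l2
    exact le_of_tendsto_of_tendsto' l1 l2 (fun k => hwf (φ k) i)
  refine ⟨x, hx, ?_⟩
  have hs : ∑ i, x i = ∑ i, f x i := by rw [hx.2, (hf x hx).2]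
  have := (Finset.sum_eq_sum_iff_of_le (fun i _ => key i)).1 hs
  funext i
  exact (this i (Finset.mem_univ i)).symm

/-- Brouwer on a cube. -/
theorem bd_brouwer_cube {ι : Type*} [Fintype ι] (g : (ι → ℝ) → (ι → ℝ))
    (hg : ∀ x, (∀ i, x i ∈ Set.Icc (0 : ℝ) 1) → ∀ i, g x i ∈ Set.Icc (0 : ℝ) 1)
    (hcont : ContinuousOn g {x | ∀ i, x i ∈ Set.Icc (0 : ℝ) 1}) :
    ∃ x, (∀ i, x i ∈ Set.Icc (0 : ℝ) 1) ∧ g x = x := by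
  set N : ℝ := Fintype.card ι + 1 with hNdef
  have hN : 0 < N := by positivity
  let h : (Option ι → ℝ) → (ι → ℝ) := fun x i => max 0 (min (N * x (some i)) 1)
  have hh : ∀ x i, h x i ∈ Set.Icc (0 : ℝ) 1 := fun x i =>
    ⟨le_max_left _ _, max_le zero_le_one (min_le_right _ _)⟩
  have hhc : Continuous h := by fun_prop
  let f : (Option ι → ℝ) → (Option ι → ℝ) := fun x o =>
    o.elim (1 - ∑ i, g (h x) i / N) (fun i => g (h x) i / N)
  have hghc : Continuous (fun x => g (h x)) :=
    hcont.comp_continuous hhc (fun x => hh x)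
  have hghi : ∀ i, Continuous (fun x => g (h x) i) := fun i => (continuous_apply i).comp hghc
  have hfc : Continuous f := by
    refine continuous_pi ?_
    rintro (_ | i)
    · simp only [f, Option.elim]
      exact continuous_const.sub (continuous_finsetSum _ fun i _ => (hghi i).div_const _)
    · simp only [f, Option.elim]
      exact (hghi i).div_const _
  obtain ⟨x, hx, hfx⟩ := bd_brouwer_simplex f (by
    intro x _
    refine ⟨?_, ?_⟩
    · rintro (_ | i)
      · simp only [f, Option.elim]
        rw [← Finset.sum_div, sub_nonneg, div_le_one hN]
        calc ∑ i, g (h x) i ≤ ∑ i : ι, (1 : ℝ) :=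
              Finset.sum_le_sum (fun i _ => (hg _ (hh x) i).2)
          _ ≤ N := by simp [hNdef]
      · simp only [f, Option.elim]
        exact div_nonneg (hg _ (hh x) i).1 hN.le
    · rw [Fintype.sum_option]
      simp [f]) hfc.continuousOn
  refine ⟨h x, hh x, ?_⟩
  funext i
  have e : g (h x) i / N = x (some i) := by
    have := congrFun hfx (some i)
    simpa [f] using this
  have e' : N * x (some i) = g (h x) i := by rw [← e]; field_simp
  have hr := hg _ (hh x) i
  simp only [h]
  rw [e', min_eq_left hr.2, max_eq_right hr.1]

theorem bd_negtype {κ : Type*} [Fintype κ] (D : κ → κ → ℝ) (C n : ℝ)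
    (hC : (n - 1) * C < n + 1) (hC1 : 1 ≤ C)
    (hcard : (Fintype.card κ : ℝ) ≤ n + 1) (h0 : ∀ i, D i i = 0)
    (h1 : ∀ i j, i ≠ j → 1 ≤ D i j ∧ D i j ≤ C) (x : κ → ℝ) (hx : ∑ i, x i = 0) :
    ∑ i, ∑ j, x i * x j * D i j ≤ - ((n + 1 - (n - 1) * C) / 2) * ∑ i, x i ^ 2 := by
  classical
  have hterm : ∀ i j, x i * x j * D i j ≤ (1 + C) / 2 * (x i * x j) + (C - 1) / 2 * (|x i| * |x j|)
      - (if i = j then C * x i ^ 2 else 0) := by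
    intro i j
    by_cases hij : i = j
    · subst hij
      rw [h0, if_pos rfl, abs_mul_abs_self]
      nlinarith
    · rw [if_neg hij]
      obtain ⟨a, b⟩ := h1 i j hij
      have : x i * x j * (D i j - (1 + C) / 2) ≤ |x i| * |x j| * ((C - 1) / 2) := by
        rw [← abs_mul]
        calc x i * x j * (D i j - (1 + C) / 2) ≤ |x i * x j * (D i j - (1 + C) / 2)| := le_abs_self _
          _ = |x i * x j| * |D i j - (1 + C) / 2| := abs_mul _ _
          _ ≤ _ := by
            gcongr
            rw [abs_le]; constructor <;> linarith
      linarith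
  have hs : ∑ i, ∑ j, x i * x j * D i j ≤ ∑ i, ∑ j, ((1 + C) / 2 * (x i * x j) +
      (C - 1) / 2 * (|x i| * |x j|) - (if i = j then C * x i ^ 2 else 0)) :=
    Finset.sum_le_sum fun i _ => Finset.sum_le_sum fun j _ => hterm i j
  have he : ∑ i, ∑ j, ((1 + C) / 2 * (x i * x j) +
      (C - 1) / 2 * (|x i| * |x j|) - (if i = j then C * x i ^ 2 else 0)) =
      (1 + C) / 2 * (∑ i, x i) ^ 2 + (C - 1) / 2 * (∑ i, |x i|) ^ 2 - C * ∑ i, x i ^ 2 := by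
    simp only [Finset.sum_sub_distrib, Finset.sum_add_distrib, ← Finset.mul_sum,
      Finset.sum_ite_eq, Finset.mem_univ, if_true, sq, Finset.sum_mul_sum]
  have hcs : (∑ i, |x i|) ^ 2 ≤ (n + 1) * ∑ i, x i ^ 2 := by
    have := sq_sum_le_card_mul_sum_sq (s := Finset.univ) (f := fun i => |x i|)
    simp only [sq_abs, Finset.card_univ] at this
    refine this.trans ?_
    gcongr
  rw [he, hx] at hs
  have : (C - 1) / 2 * (∑ i, |x i|) ^ 2 ≤ (C - 1) / 2 * ((n + 1) * ∑ i, x i ^ 2) := by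
    apply mul_le_mul_of_nonneg_left hcs; linarith
  nlinarith

theorem bd_identity {E κ : Type*} [NormedAddCommGroup E] [InnerProductSpace ℝ E] [Fintype κ]
    (v : κ → E) (l : κ → ℝ) :
    ∑ i, ∑ j, l i * l j * ‖v i - v j‖ ^ 2 =
      2 * (∑ i, l i) * (∑ i, l i * ‖v i‖ ^ 2) - 2 * ‖∑ i, l i • v i‖ ^ 2 := by
  have e1 : ∀ i j, l i * l j * ‖v i - v j‖ ^ 2 =
      l i * ‖v i‖ ^ 2 * l j + l i * (l j * ‖v j‖ ^ 2) - 2 * inner ℝ (l i • v i) (l j • v j) := by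
    intro i j
    rw [norm_sub_sq_real, inner_smul_left, inner_smul_right]
    simp only [conj_trivial]
    ring
  have e2 : ‖∑ i, l i • v i‖ ^ 2 = ∑ i, ∑ j, inner ℝ (l i • v i) (l j • v j) := by
    rw [← real_inner_self_eq_norm_sq, sum_inner]
    simp only [inner_sum]
  simp only [e1, Finset.sum_sub_distrib, Finset.sum_add_distrib, ← Finset.mul_sum]
  rw [e2, ← Finset.sum_mul, ← Finset.sum_mul]
  ring

theorem bd_euclid {E : Type*} [NormedAddCommGroup E] [InnerProductSpace ℝ E]
    [FiniteDimensional ℝ E] (n m : ℕ) (hn : finrank ℝ E = n) (hm : m + 1 ≤ n) (c : ℝ) (hc1 : 1 ≤ c)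
    (hc : ((n : ℝ) - 1) * c ^ 2 < n + 1) (p : Fin (m + 1) → E)
    (hp : ∀ i j, i ≠ j → 1 ≤ ‖p i - p j‖ ∧ ‖p i - p j‖ ≤ c) :
    ∃ q : (Fin (m + 1) → ℝ) → E, Continuous q ∧
      ∀ r, (∀ i, 1 ≤ r i ∧ r i ≤ c) → ∀ i, ‖q r - p i‖ = r i := by
  have hC1 : 1 ≤ c ^ 2 := by nlinarith
  have hmR : (m : ℝ) + 1 ≤ n := by exact_mod_cast hm
  have hsq : ∀ t : ℝ, 1 ≤ t → t ≤ c → 1 ≤ t ^ 2 ∧ t ^ 2 ≤ c ^ 2 := by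
    intro t h1 h2
    constructor <;> nlinarith
  let v : Fin (m + 1) → E := fun i => p i - p 0
  have hv0 : v 0 = 0 := sub_self _
  have hvv : ∀ i j, v i - v j = p i - p j := fun i j => by simp [v]
  let u : Fin m → E := fun i => v i.succ
  have hli : LinearIndependent ℝ u := by
    rw [Fintype.linearIndependent_iff]
    intro b hb i
    let x : Fin (m + 1) → ℝ := Fin.cons (-∑ i, b i) b
    have hx : ∑ i, x i = 0 := by simp [x, Fin.sum_univ_succ]
    have h := bd_negtype (fun i j => ‖v i - v j‖ ^ 2) (c ^ 2) n hc hC1 (by simp; linarith)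
      (by simp) (fun i j hij => by
        rw [hvv]; exact hsq _ (hp i j hij).1 (hp i j hij).2) x hx
    rw [bd_identity, hx] at h
    have hz : ∑ i, x i • v i = 0 := by
      rw [Fin.sum_univ_succ, hv0]
      simpa [x] using hb
    rw [hz] at h
    have hpos : 0 < ((n : ℝ) + 1 - (n - 1) * c ^ 2) / 2 := by linarith
    have hnn : 0 ≤ ∑ i, x i ^ 2 := Finset.sum_nonneg fun i _ => sq_nonneg _
    have hz2 : ∑ i, x i ^ 2 = 0 := by
      simp at h
      nlinarith
    have := (Finset.sum_eq_zero_iff_of_nonneg (fun i _ => sq_nonneg (x i))).1 hz2 i.succ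
      (Finset.mem_univ _)
    simpa [x] using this
  let W := Submodule.span ℝ (Set.range u)
  let B : Basis (Fin m) ℝ W := Basis.span hli
  have hB : ∀ i, ((B i : W) : E) = u i := fun i => congrArg Subtype.val (Basis.span_apply hli i)
  let w : Fin m → W := fun i => (InnerProductSpace.toDual ℝ W).symm
    (LinearMap.toContinuousLinearMap (B.coord i))
  have hw : ∀ i j, inner ℝ (w i) (B j) = if j = i then (1 : ℝ) else 0 := by
    intro i j
    simp only [w]
    rw [InnerProductSpace.toDual_symm_apply]
    simp [Finsupp.single_apply]
  obtain ⟨e, heW, he1⟩ : ∃ e ∈ Wᗮ, ‖e‖ = 1 := by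
    have hfr : finrank ℝ W = m := by rw [finrank_eq_card_basis B]; simp
    have := Submodule.finrank_add_finrank_orthogonal W
    have hne : Wᗮ ≠ ⊥ := by
      intro h
      rw [h, finrank_bot, hfr, hn] at this
      omega
    obtain ⟨e, he, hne⟩ := Submodule.exists_mem_ne_zero_of_ne_bot hne
    refine ⟨(‖e‖⁻¹ : ℝ) • e, Submodule.smul_mem _ _ he, ?_⟩
    rw [norm_smul, norm_inv, norm_norm, inv_mul_cancel₀ (norm_ne_zero_iff.2 hne)]
  let cc : (Fin (m + 1) → ℝ) → Fin (m + 1) → ℝ := fun r i => (‖v i‖ ^ 2 + r 0 ^ 2 - r i ^ 2) / 2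
  let yW : (Fin (m + 1) → ℝ) → W := fun r => ∑ i : Fin m, cc r i.succ • w i
  let y : (Fin (m + 1) → ℝ) → E := fun r => (yW r : E)
  have hyc : Continuous y := by
    apply continuous_subtype_val.comp
    apply continuous_finsetSum
    intro i _
    have hci : Continuous (fun r => cc r i.succ) := by
      simp only [cc]
      fun_prop
    exact hci.smul continuous_const
  have hyv : ∀ r i, inner ℝ (y r) (v i) = cc r i := by
    intro r i
    refine Fin.cases ?_ (fun i => ?_) i
    · simp [hv0, cc]
    · have : v i.succ = ((B i : W) : E) := (hB i).symm
      rw [this, ← Submodule.coe_inner]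
      simp only [yW, sum_inner, inner_smul_left, hw]
      simp
  have hyle : ∀ r, (∀ i, 1 ≤ r i ∧ r i ≤ c) → ‖y r‖ ^ 2 ≤ r 0 ^ 2 := by
    intro r hr
    let b : Fin m → ℝ := fun i => B.repr (yW r) i
    have hyb : y r = ∑ i, b i • u i := by
      have := congrArg (fun z : W => (z : E)) (B.sum_repr (yW r))
      simp only [Submodule.coe_sum, Submodule.coe_smul, hB] at this
      exact this.symm
    let l : Fin (m + 1) → ℝ := Fin.cons (1 - ∑ i, b i) b
    have hl : ∑ i, l i = 1 := by simp [l, Fin.sum_univ_succ]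
    have hyl : y r = ∑ i, l i • v i := by
      rw [Fin.sum_univ_succ, hv0, hyb]
      simp [l, u]
    let x : Option (Fin (m + 1)) → ℝ := fun o => o.elim (-1) l
    let D : Option (Fin (m + 1)) → Option (Fin (m + 1)) → ℝ := fun a b =>
      a.elim (b.elim 0 (fun j => r j ^ 2)) (fun i => b.elim (r i ^ 2) (fun j => ‖v i - v j‖ ^ 2))
    have h := bd_negtype D (c ^ 2) n hc hC1 (by simp; linarith)
      (by rintro (_ | i) <;> simp [D])
      (by
        rintro (_ | i) (_ | j) hij
        · exact absurd rfl hij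
        · exact hsq _ (hr j).1 (hr j).2
        · exact hsq _ (hr i).1 (hr i).2
        · have hij : i ≠ j := fun h => hij (by rw [h])
          simp only [D, Option.elim]
          rw [hvv]; exact hsq _ (hp i j hij).1 (hp i j hij).2) x (by
            rw [Fintype.sum_option]
            simp [x, hl])
    have hnn : 0 ≤ ∑ i, x i ^ 2 := Finset.sum_nonneg fun i _ => sq_nonneg _
    have h' : ∑ i, ∑ j, x i * x j * D i j ≤ 0 := by nlinarith
    have hexp : ∑ i, ∑ j, x i * x j * D i j =
        ∑ i, ∑ j, l i * l j * ‖v i - v j‖ ^ 2 - 2 * ∑ i, l i * r i ^ 2 := by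
      simp only [Fintype.sum_option, x, D, Option.elim, Finset.sum_add_distrib]
      simp only [neg_mul, one_mul, mul_neg, mul_one, Finset.sum_neg_distrib, mul_zero]
      ring
    rw [hexp, bd_identity, hl, ← hyl] at h'
    have hyy : ‖y r‖ ^ 2 = ∑ i, l i * cc r i := by
      rw [← real_inner_self_eq_norm_sq]
      conv_lhs => rw [hyl, ← hyl]
      nth_rewrite 2 [hyl]
      rw [inner_sum]
      simp only [inner_smul_right, hyv]
    have hcc : ∑ i, l i * cc r i = (∑ i, l i * ‖v i‖ ^ 2 + r 0 ^ 2 - ∑ i, l i * r i ^ 2) / 2 := by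
      have : r 0 ^ 2 = ∑ i, l i * r 0 ^ 2 := by rw [← Finset.sum_mul, hl, one_mul]
      rw [this, ← Finset.sum_add_distrib, ← Finset.sum_sub_distrib, Finset.sum_div]
      apply Finset.sum_congr rfl
      intro i _
      simp only [cc]
      ring
    linarith
  refine ⟨fun r => p 0 + (y r + Real.sqrt (r 0 ^ 2 - ‖y r‖ ^ 2) • e), by fun_prop, ?_⟩
  intro r hr i
  have hri : 0 ≤ r i := by linarith [(hr i).1]
  rw [← sq_eq_sq₀ (norm_nonneg _) hri]
  set s := Real.sqrt (r 0 ^ 2 - ‖y r‖ ^ 2) with hs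
  have hs2 : s ^ 2 = r 0 ^ 2 - ‖y r‖ ^ 2 := Real.sq_sqrt (by linarith [hyle r hr])
  have e1 : p 0 + (y r + s • e) - p i = (y r - v i) + s • e := by simp only [v]; abel
  have hvW : v i ∈ W := by
    refine Fin.cases ?_ (fun i => ?_) i
    · rw [hv0]; exact W.zero_mem
    · exact Submodule.subset_span ⟨i, rfl⟩
  have horth : inner ℝ (y r - v i) (s • e) = 0 := by
    rw [inner_smul_right, (Submodule.mem_orthogonal W e).1 heW _ (W.sub_mem (yW r).2 hvW), mul_zero]
  rw [e1, norm_add_sq_real, horth, norm_smul, he1, mul_one, Real.norm_eq_abs, sq_abs, hs2,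
    norm_sub_sq_real, hyv]
  simp only [cc]
  ring

theorem bd_main
    (X : Type*) [NormedAddCommGroup X] [NormedSpace ℝ X]
    (n : ℕ) (hn : 1 ≤ n)
    (T : X ≃ₗ[ℝ] EuclideanSpace ℝ (Fin n))
    (hT : ∀ x : X, ‖x‖ ≤ ‖T x‖ ∧ ‖T x‖ ≤ (1 + 1 / (n + 1 : ℝ)) * ‖x‖)
    (m : ℕ) (hm : m ≤ n) (p : Fin m → X)
      (hp : ∀ i j, i ≠ j → ‖p i - p j‖ = 1) :
      ∃ q : X, ∀ i, ‖q - p i‖ = 1 := by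
  rcases m with _ | m
  · exact ⟨0, fun i => i.elim0⟩
  set c : ℝ := 1 + 1 / (n + 1 : ℝ) with hc
  have hnR : (1 : ℝ) ≤ n := by exact_mod_cast hn
  have hnp : (0 : ℝ) < (n : ℝ) + 1 := by positivity
  have hc1 : 1 ≤ c := by
    have : 0 ≤ 1 / (n + 1 : ℝ) := by positivity
    linarith
  have hcn : c * (n + 1) = n + 2 := by rw [hc]; field_simp; ring
  have hc2 : ((n : ℝ) - 1) * c ^ 2 < n + 1 := by
    have : c = (n + 2) / (n + 1) := by rw [eq_div_iff hnp.ne', hcn]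
    rw [this, div_pow, mul_div_assoc', div_lt_iff₀ (by positivity)]
    nlinarith
  obtain ⟨q, hqc, hq⟩ := bd_euclid (E := EuclideanSpace ℝ (Fin n)) n m (by simp) hm c hc1 hc2
    (fun i => T (p i)) (by
      intro i j hij
      rw [← map_sub]
      have := hT (p i - p j)
      rw [hp i j hij, mul_one] at this
      exact this)
  let r : (Fin (m + 1) → ℝ) → Fin (m + 1) → ℝ := fun x i => 1 + x i / (n + 1)
  have hr : ∀ x, (∀ i, x i ∈ Set.Icc (0 : ℝ) 1) → ∀ i, 1 ≤ r x i ∧ r x i ≤ c := by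
    intro x hx i
    obtain ⟨h1, h2⟩ := hx i
    simp only [r, hc]
    constructor
    · have : 0 ≤ x i / (n + 1) := by positivity
      linarith
    · gcongr
  have hTc : Continuous T.symm := by
    have := T.symm.toLinearMap.continuous_of_finiteDimensional
    exact this
  let g : (Fin (m + 1) → ℝ) → Fin (m + 1) → ℝ := fun x i =>
    x i + (1 - ‖T.symm (q (r x)) - p i‖) * (n + 1)
  have hrc : Continuous r := by fun_prop
  have hgc : Continuous g := by
    have : Continuous (fun x => T.symm (q (r x))) := hTc.comp (hqc.comp hrc)
    fun_prop
  obtain ⟨x, hx, hgx⟩ := bd_brouwer_cube g (by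
    intro x hx i
    have h1 := hT (T.symm (q (r x)) - p i)
    rw [map_sub, T.apply_symm_apply, hq _ (hr x hx) i] at h1
    obtain ⟨ha, hb⟩ := h1
    obtain ⟨hr1, hr2⟩ := hr x hx i
    have hrx : r x i * (n + 1) = n + 1 + x i := by simp only [r]; field_simp
    set t := ‖T.symm (q (r x)) - p i‖
    simp only [g]
    have ht : 0 ≤ t := norm_nonneg _
    constructor
    · nlinarith
    · -- r ≤ c t
      -- x + (1 - t)(n+1) ≤ 1
      obtain ⟨hx0, hx1⟩ := hx i
      have h5 : r x i * (n + 1) ≤ (n + 2) * t := by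
        rw [← hcn]; nlinarith
      rw [hrx] at h5
      have h6 : (n + 2 : ℝ) * (x i + (1 - t) * (n + 1)) ≤ (n + 2) * 1 := by nlinarith
      exact le_of_mul_le_mul_left h6 (by positivity)) hgc.continuousOn
  refine ⟨T.symm (q (r x)), fun i => ?_⟩
  have := congrFun hgx i
  simp only [g] at this
  have h0 : (1 - ‖T.symm (q (r x)) - p i‖) * ((n : ℝ) + 1) = 0 := by linarith
  rcases mul_eq_zero.1 h0 with h | h
  · linarith
  · linarith

theorem brass_dekster_extension
    (X : Type*) [NormedAddCommGroup X] [NormedSpace ℝ X]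
    (n : ℕ) (hn : 1 ≤ n) (hdim : finrank ℝ X = n)
    (T : X ≃ₗ[ℝ] EuclideanSpace ℝ (Fin n))
    (hT : ∀ x : X, ‖x‖ ≤ ‖T x‖ ∧ ‖T x‖ ≤ (1 + 1 / (n + 1 : ℝ)) * ‖x‖) :
    (∀ (m : ℕ), m ≤ n → ∀ p : Fin m → X,
      (∀ i j, i ≠ j → ‖p i - p j‖ = 1) →
      ∃ q : X, ∀ i, ‖q - p i‖ = 1) ∧
    (∃ p : Fin (n + 1) → X, ∀ i j, i ≠ j → ‖p i - p j‖ = 1) := by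
  have hmain := bd_main X n hn T hT
  refine ⟨hmain, ?_⟩
  have key : ∀ k, k ≤ n + 1 → ∃ p : Fin k → X, ∀ i j, i ≠ j → ‖p i - p j‖ = 1 := by
    intro k
    induction k with
    | zero => exact fun _ => ⟨fun i => i.elim0, fun i => i.elim0⟩
    | succ k ih =>
      intro hk
      obtain ⟨p, hp⟩ := ih (by omega)
      obtain ⟨q, hq⟩ := hmain k (by omega) p hp
      refine ⟨Fin.cons q p, ?_⟩
      intro i j
      refine Fin.cases ?_ (fun i => ?_) i <;> refine Fin.cases ?_ (fun j => ?_) j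
      · intro h; exact absurd rfl h
      · intro _; simpa using hq j
      · intro _; rw [norm_sub_rev]; simpa using hq i
      · intro h
        simpa using hp i j (fun h' => h (by rw [h']))
  exact key (n + 1) le_rfl
end
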